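/- arXiv:2507.04819 — 9 statements merged into one kernel-verified Lean document; each statement's English description precedes it below -/
import Mathlib

section
/- Let v, p₁, p₂, q₁, q₂ ∈ FreeMonoid A with p₁ a suffix of p₂ and q₁ a prefix of q₂. If the words p₁ * v * q₂ and p₂ * v * q₁ are both invertible, then the words p₁ * v * q₁ and p₂ * v * q₂ are both invertible. (This says that the invertible subwords of a word u containing a fixed occurrence of v are closed under meet and join with respect to subword inclusion, so that, when nonempty, they form a lattice.) -/
/-- In a special monoid `M = ⟨A ∣ w₁ = 1, …, w_k = 1⟩`, if `p₁` is a suffix of `p₂`,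
`q₁` is a prefix of `q₂`, and the words `p₁ * v * q₂` and `p₂ * v * q₁` are both
invertible (i.e. map to units of `M`), then `p₁ * v * q₁` and `p₂ * v * q₂` are
both invertible. -/
theorem invertible_subwords_lattice {A : Type*} [Fintype A] {k : ℕ}
    (w : Fin k → FreeMonoid A)
    (rel : FreeMonoid A → FreeMonoid A → Prop)
    (hrel : ∀ x y, rel x y ↔ ∃ i : Fin k, x = w i ∧ y = 1)
    (v p₁ p₂ q₁ q₂ : FreeMonoid A)
    (hp : ∃ α, p₂ = α * p₁) (hq : ∃ β, q₂ = q₁ * β)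
    (h₁ : IsUnit (PresentedMonoid.mk rel (p₁ * v * q₂)))
    (h₂ : IsUnit (PresentedMonoid.mk rel (p₂ * v * q₁))) :
    IsUnit (PresentedMonoid.mk rel (p₁ * v * q₁)) ∧
      IsUnit (PresentedMonoid.mk rel (p₂ * v * q₂)) := by
  obtain ⟨α, rfl⟩ := hp
  obtain ⟨β, rfl⟩ := hq
  have e₁ : p₁ * v * (q₁ * β) = (p₁ * v * q₁) * β := by simp only [mul_assoc]
  have e₂ : α * p₁ * v * q₁ = α * (p₁ * v * q₁) := by simp only [mul_assoc]
  have e₃ : α * p₁ * v * (q₁ * β) = α * (p₁ * v * q₁) * β := by simp only [mul_assoc]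
  rw [e₁] at h₁
  rw [e₂] at h₂
  rw [e₃]
  generalize p₁ * v * q₁ = u at *
  rw [map_mul] at h₁ h₂
  rw [map_mul, map_mul]
  -- `u` has a right inverse by `h₁` and a left inverse by `h₂`
  obtain ⟨r, hr⟩ := h₁.exists_right_inv
  obtain ⟨l, hl⟩ := h₂.exists_left_inv
  rw [mul_assoc] at hr
  rw [← mul_assoc] at hl
  have hu : IsUnit (PresentedMonoid.mk rel u) :=
    isUnit_iff_exists_and_exists.2 ⟨⟨_, hr⟩, ⟨_, hl⟩⟩
  refine ⟨hu, ?_⟩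
  obtain ⟨U, hU⟩ := hu
  rw [← hU] at h₁ h₂ ⊢
  have hb : IsUnit (PresentedMonoid.mk rel β) := by
    simpa using h₁
  exact h₂.mul hb
end

section
/- Let u₀, v, u₁ ∈ FreeMonoid A with v nonempty, and suppose there exist a suffix p of u₀ and a prefix q of u₁ such that p * v * q is invertible. Then there exist a suffix p₀ of u₀ and a prefix q₀ of u₁ such that: (i) p₀ * v * q₀ is invertible; (ii) for every suffix p of u₀ and prefix q of u₁ with p * v * q invertible, p₀ is a suffix of p and q₀ is a prefix of q (i.e. p₀ * v * q₀ is the unique smallest invertible subword of u₀ * v * u₁ containing this occurrence of v); and (iii) no nonempty prefix of p₀ is invertible and no nonempty suffix of q₀ is invertible. -/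
theorem aux_tail {A : Type*} {u p p' : FreeMonoid A} (h : ∃ α, u = α * p)
    (h' : ∃ α, u = α * p') (hl : p.length ≤ p'.length) : ∃ a, p' = a * p := by
  obtain ⟨α, hα⟩ := h
  obtain ⟨α', hα'⟩ := h'
  have h1 : List.IsSuffix (α := A) p u := ⟨α, hα.symm⟩
  have h2 : List.IsSuffix (α := A) p' u := ⟨α', hα'.symm⟩
  obtain ⟨a, ha⟩ := List.suffix_of_suffix_length_le h1 h2 hl
  exact ⟨a, ha.symm⟩

theorem aux_init {A : Type*} {u p p' : FreeMonoid A} (h : ∃ α, u = p * α)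
    (h' : ∃ α, u = p' * α) (hl : p.length ≤ p'.length) : ∃ a, p' = p * a := by
  obtain ⟨α, hα⟩ := h
  obtain ⟨α', hα'⟩ := h'
  have h1 : List.IsPrefix (α := A) p u := ⟨α, hα.symm⟩
  have h2 : List.IsPrefix (α := A) p' u := ⟨α', hα'.symm⟩
  obtain ⟨a, ha⟩ := List.prefix_of_prefix_length_le h1 h2 hl
  exact ⟨a, ha.symm⟩

/-- If `x * y` and `y * z` are units then so is `y`. -/
theorem aux_overlap {M : Type*} [Monoid M] {x y z : M} (h : IsUnit (x * y))
    (h' : IsUnit (y * z)) : IsUnit y := by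
  obtain ⟨c, hc⟩ := h.exists_left_inv
  obtain ⟨d, hd⟩ := h'.exists_right_inv
  rw [← mul_assoc] at hc
  rw [mul_assoc] at hd
  have e : c * x = z * d := left_inv_eq_right_inv hc hd
  exact ⟨⟨y, c * x, by rw [e, hd], hc⟩, rfl⟩

theorem aux_min {α : Type*} (P : α → Prop) (f : α → ℕ) (h : ∃ x, P x) :
    ∃ x, P x ∧ ∀ y, P y → f x ≤ f y := by
  obtain ⟨x, hx, hm⟩ := WellFounded.has_min (measure f).wf {x | P x} h
  exact ⟨x, hx, fun y hy => not_lt.1 (hm y hy)⟩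

/-- In a special monoid `M = ⟨A ∣ w₁ = 1, …, w_k = 1⟩`, let `u₀, v, u₁` be words with `v`
nonempty, and suppose some invertible subword `p * v * q` of `u₀ * v * u₁` contains the
distinguished occurrence of `v` (with `p` a suffix of `u₀` and `q` a prefix of `u₁`).
Then there is a unique smallest such invertible subword `p₀ * v * q₀`; moreover, no
nonempty prefix of `p₀` is invertible and no nonempty suffix of `q₀` is invertible. -/
theorem min_invertible_subword {A : Type*} [Fintype A] {k : ℕ}
    (w : Fin k → FreeMonoid A)
    (rel : FreeMonoid A → FreeMonoid A → Prop)
    (hrel : ∀ x y, rel x y ↔ ∃ i : Fin k, x = w i ∧ y = 1)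
    (u₀ v u₁ : FreeMonoid A) (hv : v ≠ 1)
    (hex : ∃ p q, (∃ α, u₀ = α * p) ∧ (∃ β, u₁ = q * β) ∧
      IsUnit (PresentedMonoid.mk rel (p * v * q))) :
    ∃ p₀ q₀, (∃ α, u₀ = α * p₀) ∧ (∃ β, u₁ = q₀ * β) ∧
      IsUnit (PresentedMonoid.mk rel (p₀ * v * q₀)) ∧
      (∀ p q, (∃ α, u₀ = α * p) → (∃ β, u₁ = q * β) →
        IsUnit (PresentedMonoid.mk rel (p * v * q)) →
        (∃ α, p = α * p₀) ∧ (∃ β, q = q₀ * β)) ∧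
      (∀ p, p ≠ 1 → (∃ β, p₀ = p * β) → ¬ IsUnit (PresentedMonoid.mk rel p)) ∧
      (∀ s, s ≠ 1 → (∃ α, q₀ = α * s) → ¬ IsUnit (PresentedMonoid.mk rel s)) := by
  let P : FreeMonoid A × FreeMonoid A → Prop := fun x =>
    (∃ α, u₀ = α * x.1) ∧ (∃ β, u₁ = x.2 * β) ∧
      IsUnit (PresentedMonoid.mk rel (x.1 * v * x.2))
  have hP : ∃ x, P x := by
    obtain ⟨p, q, h⟩ := hex
    exact ⟨(p, q), h⟩
  obtain ⟨⟨p₀, q'⟩, ⟨hp₀, hq', hu1⟩, hm1⟩ := aux_min P (fun x => x.1.length) hP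
  obtain ⟨⟨p', q₀⟩, ⟨hp', hq₀, hu2⟩, hm2⟩ := aux_min P (fun x => x.2.length) hP
  dsimp only at hp₀ hq' hu1 hp' hq₀ hu2 hm1 hm2
  have hu : IsUnit (PresentedMonoid.mk rel (p₀ * v * q₀)) := by
    obtain ⟨a, rfl⟩ := aux_tail hp₀ hp' (hm1 (p', q₀) ⟨hp', hq₀, hu2⟩)
    obtain ⟨b, rfl⟩ := aux_init hq₀ hq' (hm2 (p₀, q') ⟨hp₀, hq', hu1⟩)
    refine aux_overlap (x := PresentedMonoid.mk rel a) (z := PresentedMonoid.mk rel b) ?_ ?_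
    · rw [← map_mul]
      simpa only [mul_assoc] using hu2
    · rw [← map_mul]
      simpa only [mul_assoc] using hu1
  refine ⟨p₀, q₀, hp₀, hq₀, hu, ?_, ?_, ?_⟩
  · intro p q hp hq h
    exact ⟨aux_tail hp₀ hp (hm1 (p, q) ⟨hp, hq, h⟩),
      aux_init hq₀ hq (hm2 (p, q) ⟨hp, hq, h⟩)⟩
  · rintro p hp ⟨β, rfl⟩ h
    rw [mul_assoc, mul_assoc, map_mul, h.mul_left_iff, ← mul_assoc] at hu
    obtain ⟨α, hα⟩ := hp₀
    have hl := hm1 (β, q₀) ⟨⟨α * p, by rw [hα, mul_assoc]⟩, hq₀, hu⟩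
    simp only [FreeMonoid.length_mul] at hl
    exact hp (FreeMonoid.length_eq_zero.1 (by omega))
  · rintro s hs ⟨α, rfl⟩ h
    rw [← mul_assoc, map_mul, h.mul_right_iff] at hu
    obtain ⟨β, hβ⟩ := hq₀
    have hl := hm2 (p₀, α) ⟨hp₀, ⟨s * β, by rw [hβ, mul_assoc]⟩, hu⟩
    simp only [FreeMonoid.length_mul] at hl
    exact hs (FreeMonoid.length_eq_zero.1 (by omega))
end

section
/- Let u, v ∈ FreeMonoid A be nonempty words, and suppose some pair cuts across (u, v). Then there is a least such pair: there exist u₂⁰, v₁⁰ such that (u₂⁰, v₁⁰) cuts across (u, v) and, for every pair (u₂, v₁) cutting across (u, v), u₂⁰ is a suffix of u₂ and v₁⁰ is a prefix of v₁. -/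
theorem fm_suffix {A : Type*} {u a b x y : FreeMonoid A} (h1 : u = x * a) (h2 : u = y * b)
    (h : a.length ≤ b.length) : ∃ c, b = c * a := by
  have h1' : (FreeMonoid.toList a) <:+ (FreeMonoid.toList u) := ⟨FreeMonoid.toList x, h1.symm⟩
  have h2' : (FreeMonoid.toList b) <:+ (FreeMonoid.toList u) := ⟨FreeMonoid.toList y, h2.symm⟩
  obtain ⟨c, hc⟩ := List.suffix_of_suffix_length_le h1' h2' h
  exact ⟨FreeMonoid.ofList c, hc.symm⟩

theorem fm_prefix {A : Type*} {u a b x y : FreeMonoid A} (h1 : u = a * x) (h2 : u = b * y)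
    (h : a.length ≤ b.length) : ∃ c, b = a * c := by
  have h1' : (FreeMonoid.toList a) <+: (FreeMonoid.toList u) := ⟨FreeMonoid.toList x, h1.symm⟩
  have h2' : (FreeMonoid.toList b) <+: (FreeMonoid.toList u) := ⟨FreeMonoid.toList y, h2.symm⟩
  obtain ⟨c, hc⟩ := List.prefix_of_prefix_length_le h1' h2' h
  exact ⟨FreeMonoid.ofList c, hc.symm⟩

theorem unit_mid {M : Type*} [Monoid M] {x z y : M} (h1 : IsUnit (x * z)) (h2 : IsUnit (z * y)) :
    IsUnit z := by
  obtain ⟨a, ha⟩ := h1.exists_left_inv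
  obtain ⟨b, hb⟩ := h2.exists_right_inv
  exact isUnit_iff_exists_and_exists.2
    ⟨⟨y * b, by rw [← mul_assoc, hb]⟩, ⟨a * x, by rw [mul_assoc, ha]⟩⟩

/-- In a special monoid `M = ⟨A ∣ w₁ = 1, …, w_k = 1⟩`, if `u, v` are nonempty words and
some pair cuts across `(u, v)` (i.e. some nonempty suffix `u₂` of `u` and nonempty prefix
`v₁` of `v` have `u₂ * v₁` invertible), then there is a least such pair: a pair
`(u₂⁰, v₁⁰)` cutting across `(u, v)` such that for every pair `(u₂, v₁)` cutting across
`(u, v)`, `u₂⁰` is a suffix of `u₂` and `v₁⁰` is a prefix of `v₁`. -/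
theorem least_cut_across {A : Type*} [Fintype A] {k : ℕ}
    (w : Fin k → FreeMonoid A)
    (rel : FreeMonoid A → FreeMonoid A → Prop)
    (hrel : ∀ x y, rel x y ↔ ∃ i : Fin k, x = w i ∧ y = 1)
    (u v : FreeMonoid A) (hu : u ≠ 1) (hv : v ≠ 1)
    (hex : ∃ u₂ v₁ : FreeMonoid A, u₂ ≠ 1 ∧ (∃ α, u = α * u₂) ∧ v₁ ≠ 1 ∧
      (∃ β, v = v₁ * β) ∧ IsUnit (PresentedMonoid.mk rel (u₂ * v₁))) :
    ∃ u₂₀ v₁₀ : FreeMonoid A,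
      (u₂₀ ≠ 1 ∧ (∃ α, u = α * u₂₀) ∧ v₁₀ ≠ 1 ∧ (∃ β, v = v₁₀ * β) ∧
        IsUnit (PresentedMonoid.mk rel (u₂₀ * v₁₀))) ∧
      ∀ u₂ v₁ : FreeMonoid A, u₂ ≠ 1 → (∃ α, u = α * u₂) → v₁ ≠ 1 →
        (∃ β, v = v₁ * β) → IsUnit (PresentedMonoid.mk rel (u₂ * v₁)) →
        (∃ α, u₂ = α * u₂₀) ∧ (∃ β, v₁ = v₁₀ * β) := by
  classical
  let P : FreeMonoid A × FreeMonoid A → Prop := fun p =>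
    p.1 ≠ 1 ∧ (∃ α, u = α * p.1) ∧ p.2 ≠ 1 ∧
      (∃ β, v = p.2 * β) ∧ IsUnit (PresentedMonoid.mk rel (p.1 * p.2))
  obtain ⟨a₀, b₀, h₀⟩ := hex
  have hne : {p | P p}.Nonempty := ⟨(a₀, b₀), h₀⟩
  obtain ⟨⟨a, b⟩, hab, hmin⟩ := exists_minimalFor_of_wellFoundedLT P
    (fun p => p.1.length) hne
  obtain ⟨⟨c, d⟩, hcd, hmin'⟩ := exists_minimalFor_of_wellFoundedLT P
    (fun p => p.2.length) hne
  have ha : ∀ p, P p → a.length ≤ p.1.length := fun p hp =>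
    (le_total a.length p.1.length).elim id (fun h => hmin hp h)
  have hd : ∀ p, P p → d.length ≤ p.2.length := fun p hp =>
    (le_total d.length p.2.length).elim id (fun h => hmin' hp h)
  obtain ⟨ha1, ⟨αa, hαa⟩, hb1, ⟨βb, hβb⟩, hub⟩ := id hab
  obtain ⟨hc1, ⟨αc, hαc⟩, hd1, ⟨βd, hβd⟩, hud⟩ := id hcd
  refine ⟨a, d, ⟨ha1, ⟨αa, hαa⟩, hd1, ⟨βd, hβd⟩, ?_⟩, ?_⟩
  · obtain ⟨x, hx⟩ := fm_suffix hαa hαc (ha _ hcd)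
    obtain ⟨y, hy⟩ := fm_prefix hβd hβb (hd _ hab)
    dsimp only at hub hud hx hy
    rw [hy, ← mul_assoc, map_mul] at hub
    rw [hx, mul_assoc, map_mul] at hud
    exact unit_mid hud hub
  · rintro u₂ v₁ h1 ⟨α, h2⟩ h3 ⟨β, h4⟩ h5
    have hP : P (u₂, v₁) := ⟨h1, ⟨α, h2⟩, h3, ⟨β, h4⟩, h5⟩
    exact ⟨fm_suffix hαa h2 (ha _ hP), fm_prefix hβd h4 (hd _ hP)⟩
end

section
/- Let μ, γ ∈ FreeMonoid A be nonempty words such that μ * γ is invertible but μ is not invertible. Assume (μ, γ) has height 0, meaning that the only pair cutting across (μ, γ) is (μ, γ) itself. Then for every nonempty prefix p of μ there is no y ∈ M with y * π p = 1 (μ has no nonempty left invertible prefix), and for every nonempty suffix s of γ there is no y ∈ M with π s * y = 1 (γ has no nonempty right invertible suffix). -/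
/-- In a special monoid `M = ⟨A ∣ w₁ = 1, …, w_k = 1⟩`, let `μ, γ` be nonempty words with
`μ * γ` invertible but `μ` not invertible, and suppose `(μ, γ)` has height `0`, i.e. the
only pair cutting across `(μ, γ)` is `(μ, γ)` itself. Then `μ` has no nonempty left
invertible prefix and `γ` has no nonempty right invertible suffix. -/
theorem height_zero_no_invertible_ends {A : Type*} [Fintype A] {k : ℕ}
    (w : Fin k → FreeMonoid A)
    (rel : FreeMonoid A → FreeMonoid A → Prop)
    (hrel : ∀ x y, rel x y ↔ ∃ i : Fin k, x = w i ∧ y = 1)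
    (μ γ : FreeMonoid A) (hμ : μ ≠ 1) (hγ : γ ≠ 1)
    (hinv : IsUnit (PresentedMonoid.mk rel (μ * γ)))
    (hμni : ¬ IsUnit (PresentedMonoid.mk rel μ))
    (hht : ∀ u₂ v₁ : FreeMonoid A, u₂ ≠ 1 → (∃ α, μ = α * u₂) → v₁ ≠ 1 →
      (∃ β, γ = v₁ * β) → IsUnit (PresentedMonoid.mk rel (u₂ * v₁)) →
      u₂ = μ ∧ v₁ = γ) :
    (∀ p : FreeMonoid A, p ≠ 1 → (∃ β, μ = p * β) →
      ¬ ∃ y : PresentedMonoid rel, y * PresentedMonoid.mk rel p = 1) ∧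
    (∀ s : FreeMonoid A, s ≠ 1 → (∃ α, γ = α * s) →
      ¬ ∃ y : PresentedMonoid rel, PresentedMonoid.mk rel s * y = 1) := by
  have key : ∀ {N : Type _} [Monoid N] (a b c : N), a * b = 1 → b * c = 1 → IsUnit b := by
    intro N _ a b c h1 h2
    have h : a = c := left_inv_eq_right_inv h1 h2
    subst h
    exact ⟨⟨b, a, h2, h1⟩, rfl⟩
  obtain ⟨e, he⟩ := hinv
  have hr : PresentedMonoid.mk rel (μ * γ) * (e⁻¹ : (PresentedMonoid rel)ˣ) = 1 := by
    rw [← he]; simp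
  have hl : ((e⁻¹ : (PresentedMonoid rel)ˣ) : PresentedMonoid rel)
      * PresentedMonoid.mk rel (μ * γ) = 1 := by
    rw [← he]; simp
  have hu : IsUnit (PresentedMonoid.mk rel (μ * γ)) := ⟨e, he⟩
  constructor
  · rintro p hp ⟨β, hβ⟩ ⟨y, hy⟩
    have hpu : IsUnit (PresentedMonoid.mk rel p) := by
      refine key _ _ (PresentedMonoid.mk rel (β * γ) * (e⁻¹ : (PresentedMonoid rel)ˣ)) hy ?_
      rw [← mul_assoc, ← map_mul, ← mul_assoc, ← hβ, hr]
    have h2 : IsUnit (PresentedMonoid.mk rel (β * γ)) := by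
      rw [hβ, mul_assoc, map_mul] at hu
      obtain ⟨q, hq⟩ := hpu
      rw [← hq] at hu
      exact (Units.isUnit_units_mul q _).1 hu
    by_cases hb : β = 1
    · subst hb
      rw [mul_one] at hβ
      exact hμni (hβ ▸ hpu)
    · have h3 := (hht β γ hb ⟨p, hβ⟩ hγ ⟨1, (mul_one γ).symm⟩ h2).1
      rw [h3] at hβ
      exact hp (right_eq_mul.1 hβ)
  · rintro s hs ⟨α, hα⟩ ⟨y, hy⟩
    have hsu : IsUnit (PresentedMonoid.mk rel s) := by
      refine key ((e⁻¹ : (PresentedMonoid rel)ˣ) * PresentedMonoid.mk rel (μ * α)) _ _ ?_ hy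
      rw [mul_assoc, ← map_mul, mul_assoc, ← hα, hl]
    have h2 : IsUnit (PresentedMonoid.mk rel (μ * α)) := by
      rw [hα, ← mul_assoc, map_mul] at hu
      obtain ⟨q, hq⟩ := hsu
      rw [← hq] at hu
      exact (Units.isUnit_mul_units _ q).1 hu
    by_cases ha : α = 1
    · subst ha
      rw [mul_one] at h2
      exact hμni h2
    · have h3 := (hht μ α hμ ⟨1, (one_mul μ).symm⟩ ha ⟨s, hα⟩ h2).2
      rw [h3] at hα
      exact hs (left_eq_mul.1 hα)
end

section
/- Let M be a finitely presented special monoid ⟨A ∣ w₁ = 1, …, w_k = 1⟩ and let N be the submonoid of M × Mᵒᵖ consisting of the pairs (u, v) with u * v = 1 in M. Then N is a finitely generated monoid. -/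
/-- A splitting of `a * b` cuts either `a` or `b`. -/
theorem freeMonoid_mul_eq_mul {A : Type*} {a b u v : FreeMonoid A} (h : a * b = u * v) :
    (∃ t, u = a * t ∧ b = t * v) ∨ (∃ t, a = u * t ∧ v = t * b) :=
  List.append_eq_append_iff.mp h

/-- The class of a splitting of a word. -/
def splitPair {A : Type*} (rel : FreeMonoid A → FreeMonoid A → Prop) (u v : FreeMonoid A) :
    PresentedMonoid rel × (PresentedMonoid rel)ᵐᵒᵖ :=
  (PresentedMonoid.mk rel u, MulOpposite.op (PresentedMonoid.mk rel v))

/-- All splittings of `x` have class in `S`. -/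
def AllSplit {A : Type*} (rel : FreeMonoid A → FreeMonoid A → Prop)
    (S : Submonoid (PresentedMonoid rel × (PresentedMonoid rel)ᵐᵒᵖ)) (x : FreeMonoid A) : Prop :=
  ∀ u v, x = u * v → splitPair rel u v ∈ S

/-- The syntactic congruence of `AllSplit`. -/
def splitCon {A : Type*} (rel : FreeMonoid A → FreeMonoid A → Prop)
    (S : Submonoid (PresentedMonoid rel × (PresentedMonoid rel)ᵐᵒᵖ)) : Con (FreeMonoid A) where
  r x y := ∀ a b, AllSplit rel S (a * x * b) ↔ AllSplit rel S (a * y * b)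
  iseqv := ⟨fun _ _ _ => Iff.rfl, fun h a b => (h a b).symm,
    fun h h' a b => (h a b).trans (h' a b)⟩
  mul' := by
    intro w x y z h h' a b
    have h1 := h a (y * b)
    have h2 := h' (a * x) b
    simp only [mul_assoc] at h1 h2 ⊢
    exact h1.trans h2

theorem allSplit_insert {A : Type*} (rel : FreeMonoid A → FreeMonoid A → Prop)
    (S : Submonoid (PresentedMonoid rel × (PresentedMonoid rel)ᵐᵒᵖ)) (w : FreeMonoid A)
    (hw : PresentedMonoid.mk rel w = 1) (hS : AllSplit rel S w) (a b : FreeMonoid A) :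
    AllSplit rel S (a * w * b) ↔ AllSplit rel S (a * 1 * b) := by
  rw [mul_one]
  constructor
  · intro h u v huv
    rcases freeMonoid_mul_eq_mul huv with ⟨t, rfl, rfl⟩ | ⟨t, rfl, rfl⟩
    · have := h (a * w * t) v (by simp only [mul_assoc])
      simpa [splitPair, hw] using this
    · have := h u (t * w * b) (by simp only [mul_assoc])
      simpa [splitPair, hw] using this
  · intro h u v huv
    rcases freeMonoid_mul_eq_mul huv with ⟨t, rfl, rfl⟩ | ⟨t, ht, rfl⟩
    · have := h (a * t) v (by simp only [mul_assoc])
      simpa [splitPair, hw] using this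
    · rcases freeMonoid_mul_eq_mul ht with ⟨s, rfl, rfl⟩ | ⟨s, rfl, rfl⟩
      · have h1 := h a b rfl
        have h2 := hS s t rfl
        have := S.mul_mem h1 h2
        simpa [splitPair] using this
      · have := h u (s * b) (by simp only [mul_assoc])
        simpa [splitPair, hw] using this

/-- Let `M = ⟨A ∣ w₁ = 1, …, w_k = 1⟩` be a finitely presented special monoid and let `N`
be the submonoid of `M × Mᵐᵒᵖ` consisting of the pairs `(u, v)` with `u * v = 1` in `M`.
Then `N` is a finitely generated monoid. -/
theorem special_monoid_N_fg {A : Type*} [Fintype A] {k : ℕ}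
    (w : Fin k → FreeMonoid A)
    (rel : FreeMonoid A → FreeMonoid A → Prop)
    (hrel : ∀ x y, rel x y ↔ ∃ i : Fin k, x = w i ∧ y = 1)
    (N : Submonoid (PresentedMonoid rel × (PresentedMonoid rel)ᵐᵒᵖ))
    (hN : ∀ p : PresentedMonoid rel × (PresentedMonoid rel)ᵐᵒᵖ,
      p ∈ N ↔ p.1 * p.2.unop = 1) :
    Monoid.FG N := by
  rw [Monoid.fg_iff_submonoid_fg, Submonoid.fg_iff]
  have hw : ∀ i, PresentedMonoid.mk rel (w i) = 1 := fun i => by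
    rw [← map_one (PresentedMonoid.mk rel)]
    exact (Con.eq _).2 (ConGen.Rel.of _ _ ((hrel _ _).2 ⟨i, rfl, rfl⟩))
  let f : (Σ i : Fin k, Fin ((w i).toList.length + 1)) →
      PresentedMonoid rel × (PresentedMonoid rel)ᵐᵒᵖ := fun p =>
    splitPair rel (FreeMonoid.ofList ((w p.1).toList.take p.2))
      (FreeMonoid.ofList ((w p.1).toList.drop p.2))
  refine ⟨Set.range f, ?_, Set.finite_range f⟩
  apply le_antisymm
  · rw [Submonoid.closure_le]
    rintro _ ⟨⟨i, n⟩, rfl⟩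
    rw [SetLike.mem_coe, hN]
    simp only [f, splitPair, MulOpposite.unop_op]
    rw [← map_mul, ← FreeMonoid.ofList_append, List.take_append_drop]
    exact hw i
  · set S := Submonoid.closure (Set.range f) with hSdef
    have hS : ∀ i, AllSplit rel S (w i) := by
      intro i u v huv
      apply Submonoid.subset_closure
      have hl : (w i).toList = u.toList ++ v.toList := by rw [huv, FreeMonoid.toList_mul]
      refine ⟨⟨i, ⟨u.toList.length, ?_⟩⟩, ?_⟩
      · rw [hl, List.length_append]; omega
      · simp [f, hl]
    have hle : conGen rel ≤ splitCon rel S := by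
      rw [Con.conGen_le]
      intro x y hxy
      obtain ⟨i, rfl, rfl⟩ := (hrel x y).1 hxy
      exact allSplit_insert rel S (w i) (hw i) (hS i)
    rintro ⟨x, y⟩ hp
    rw [hN] at hp
    obtain ⟨y, rfl⟩ := MulOpposite.op_surjective y
    obtain ⟨u, rfl⟩ := PresentedMonoid.surjective_mk x
    obtain ⟨v, rfl⟩ := PresentedMonoid.surjective_mk y
    have hp' : PresentedMonoid.mk rel (u * v) = PresentedMonoid.mk rel 1 := by
      simpa using hp
    have hc : conGen rel (u * v) 1 := (Con.eq _).1 hp'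
    have h := (hle hc) 1 1
    simp only [one_mul, mul_one] at h
    refine h.2 ?_ u v rfl
    intro a b hab
    have hl : a.toList ++ b.toList = [] := by
      rw [← FreeMonoid.toList_mul, ← hab, FreeMonoid.toList_one]
    obtain ⟨ha, hb⟩ := List.append_eq_nil_iff.1 hl
    have ha' : a = 1 := ha
    have hb' : b = 1 := hb
    subst ha' hb'
    have : splitPair rel 1 1 = 1 := by simp [splitPair]
    rw [this]
    exact S.one_mem
end

section
/- Let N be a cancellative monoid, let G be a subgroup of the group of units of N (whose elements are identified with elements of N), and let X ⊆ N. Assume: (a) N is generated as a monoid by the union of (the image of) G and X; (b) A is a set with a right N-action such that the subsets A·x := {a·x : a ∈ A} for x ∈ X are pairwise disjoint; (c) letting A₀ := A \ ⋃_{x ∈ X} A·x, for every x ∈ X and every g ∈ G with g ≠ 1 one has A·x·g ⊆ A₀; and (d) A·x ≠ A for every x ∈ X. Then the canonical monoid homomorphism from the monoid coproduct (free product) G ∗ FreeMonoid X to N, induced by the inclusion of G into N and the inclusion map X → N, is bijective. In particular, the submonoid of N generated by X is a free monoid with basis X, and N is isomorphic to the free product G ∗ X*. -/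
/-- Normal forms in the free product. -/
inductive PPNormal {G X : Type*} [Group G] : Monoid.Coprod G (FreeMonoid X) → Prop
  | base (g : G) : PPNormal (Monoid.Coprod.inl g)
  | step (u : Monoid.Coprod G (FreeMonoid X)) (x : X) (g : G) (h : PPNormal u) :
      PPNormal (u * Monoid.Coprod.inr (FreeMonoid.of x) * Monoid.Coprod.inl g)

theorem PPNormal.mul_inl {G X : Type*} [Group G] {u : Monoid.Coprod G (FreeMonoid X)}
    (h : PPNormal u) (k : G) : PPNormal (u * Monoid.Coprod.inl k) := by
  cases h with
  | base g => rw [← map_mul]; exact PPNormal.base _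
  | step u x g h => rw [mul_assoc, ← map_mul]; exact PPNormal.step _ _ _ h

theorem PPNormal.mul_inr {G X : Type*} [Group G] (w : FreeMonoid X) :
    ∀ {u : Monoid.Coprod G (FreeMonoid X)}, PPNormal u → PPNormal (u * Monoid.Coprod.inr w) := by
  induction w using FreeMonoid.inductionOn' with
  | one => intro u h; simpa using h
  | of_mul x w ih =>
    intro u h
    rw [map_mul, ← mul_assoc]
    apply ih
    simpa using PPNormal.step u x 1 h

theorem PPNormal.all {G X : Type*} [Group G] (w : Monoid.Coprod G (FreeMonoid X)) :
    PPNormal w := by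
  have key : ∀ u : Monoid.Coprod G (FreeMonoid X), PPNormal u → PPNormal (u * w) := by
    induction w using Monoid.Coprod.induction_on with
    | inl g => intro u h; exact h.mul_inl g
    | inr x => intro u h; exact h.mul_inr x
    | mul a b ha hb => intro u h; rw [← mul_assoc]; exact hb _ (ha _ h)
  have h1 : PPNormal (1 : Monoid.Coprod G (FreeMonoid X)) := by
    simpa using PPNormal.base (X := X) (1 : G)
  simpa using key 1 h1

open MulOpposite in
/-- Ping Pong Lemma: let `N` be a cancellative monoid, `G` a subgroup of the group of
units of `N` and `X ⊆ N` with `N` generated by `G ∪ X`.  Suppose `N` acts on the right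
of a set `A` (i.e. `Nᵐᵒᵖ` acts on `A`) in such a way that the sets `A·x` (`x ∈ X`) are
pairwise disjoint, `A·x·g` lies in the complement `A₀` of `⋃_{x ∈ X} A·x` whenever
`x ∈ X` and `1 ≠ g ∈ G`, and `A·x ≠ A` for all `x ∈ X`.  Then the canonical
homomorphism `G ∗ X* → N` is bijective; in particular `⟨X⟩` is a free monoid with basis
`X` and `N ≅ G ∗ X*`. -/
theorem ping_pong_coprod {N : Type*} [CancelMonoid N] (G : Subgroup Nˣ) (X : Set N)
    {A : Type*} [MulAction Nᵐᵒᵖ A]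
    (hgen : Submonoid.closure ((fun g : Nˣ => (g : N)) '' (G : Set Nˣ) ∪ X) = ⊤)
    (hdisj : X.PairwiseDisjoint fun x : N => Set.range fun a : A => op x • a)
    (hping : ∀ x ∈ X, ∀ g ∈ G, g ≠ 1 → ∀ a : A,
      op ((g : Nˣ) : N) • (op x • a) ∈
        Set.univ \ ⋃ y ∈ X, Set.range fun a : A => op y • a)
    (hproper : ∀ x ∈ X, (Set.range fun a : A => op x • a) ≠ Set.univ) :
    Function.Bijective
      (Monoid.Coprod.lift ((Units.coeHom N).comp G.subtype)
        (FreeMonoid.lift fun x : X => (x : N))) := by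
  set φ := Monoid.Coprod.lift ((Units.coeHom N).comp G.subtype)
        (FreeMonoid.lift fun x : X => (x : N)) with hφ
  have hl : ∀ g : G, φ (Monoid.Coprod.inl g) = ((g : Nˣ) : N) := fun g => by simp [hφ]
  have hr : ∀ x : X, φ (Monoid.Coprod.inr (FreeMonoid.of x)) = (x : N) := fun x => by simp [hφ]
  have hmix : ∀ (n : N) (x : X) (g : G) (h : G), n * x * ((g : Nˣ) : N) ≠ ((h : Nˣ) : N) := by
    intro n x g h e
    apply hproper x x.2
    rw [Set.eq_univ_iff_forall]
    intro a
    have e2 : ((((g * h⁻¹ : G) : Nˣ) : N) * n) * x = 1 := by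
      have h3 : n * x = ((h : Nˣ) : N) * (((g : Nˣ)⁻¹ : Nˣ) : N) := by
        rw [← e]; simp [mul_assoc]
      rw [mul_assoc, h3]
      simp [mul_assoc]
    refine ⟨op ((((g * h⁻¹ : G) : Nˣ) : N) * n) • a, ?_⟩
    show op (x : N) • _ = a
    rw [smul_smul, ← op_mul, e2, op_one, one_smul]
  refine ⟨?_, ?_⟩
  · intro u
    induction PPNormal.all u with
    | base g =>
      intro v hv
      cases PPNormal.all v with
      | base h =>
        rw [hl, hl] at hv
        rw [Subtype.ext (Units.ext hv)]
      | step v y h _ =>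
        rw [map_mul, map_mul, hl, hl, hr] at hv
        exact absurd hv.symm (hmix _ _ _ _)
    | step u x g _ ih =>
      intro v hv
      cases PPNormal.all v with
      | base h =>
        rw [map_mul, map_mul, hl, hl, hr] at hv
        exact absurd hv (hmix _ _ _ _)
      | step v y h _ =>
        rw [map_mul, map_mul, map_mul, map_mul, hl, hl, hr, hr] at hv
        have hA : Nonempty A := by
          by_contra hne
          rw [not_nonempty_iff] at hne
          exact hproper x x.2 (Set.eq_univ_of_forall fun a => isEmptyElim a)
        obtain ⟨a⟩ := hA
        have hgh : g = h := by
          by_contra hne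
          have h1 : φ u * x * (((g : Nˣ) * (h : Nˣ)⁻¹ : Nˣ) : N) = φ v * y := by
            rw [Units.val_mul, ← mul_assoc, hv]; simp [mul_assoc]
          have h2 := hping x x.2 ((g : Nˣ) * (h : Nˣ)⁻¹) (G.mul_mem g.2 (G.inv_mem h.2))
            (fun e => hne (Subtype.ext (mul_inv_eq_one.mp e))) (op (φ u) • a)
          apply h2.2
          rw [smul_smul, smul_smul, ← op_mul, ← op_mul, ← mul_assoc, h1]
          simp only [Set.mem_iUnion]
          exact ⟨y, y.2, op (φ v) • a, by simp only [smul_smul, op_mul]⟩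
        subst hgh
        have hv2 := mul_right_cancel hv
        have hxy : x = y := by
          by_contra hne
          have hd := hdisj x.2 y.2 (fun e => hne (Subtype.ext e))
          refine Set.disjoint_left.mp hd ⟨op (φ u) • a, rfl⟩ ⟨op (φ v) • a, ?_⟩
          simp only [smul_smul, ← op_mul, hv2]
        subst hxy
        rw [ih (mul_right_cancel hv2)]
  · rw [← MonoidHom.mrange_eq_top, eq_top_iff, ← hgen, Submonoid.closure_le]
    rintro n (⟨g, hg, rfl⟩ | hx)
    · exact ⟨Monoid.Coprod.inl ⟨g, hg⟩, hl _⟩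
    · exact ⟨Monoid.Coprod.inr (FreeMonoid.of ⟨n, hx⟩), hr _⟩
end

section
/- Let M be a finitely presented special monoid ⟨A ∣ w₁ = 1, …, w_k = 1⟩, let G = Mˣ be its group of units, and let N be the submonoid of M × Mᵒᵖ consisting of the pairs (u, v) with u * v = 1 in M. Then N is isomorphic, as a monoid, to the free product of G with a free monoid of finite rank: there exists n : ℕ such that N ≃* Monoid.Coprod Mˣ (FreeMonoid (Fin n)). -/
namespace SpecialN

/-- Abstract data of a special presentation. -/
structure SP (A M : Type*) [Monoid M] where
  π : List A → M
  nil : π [] = 1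
  app : ∀ x y, π (x ++ y) = π x * π y
  surj : Function.Surjective π
  W : Set (List A)
  hW : ∀ w ∈ W, π w = 1
  ind : ∀ x y, π x = π y →
    Relation.EqvGen (fun x y => ∃ a w b, w ∈ W ∧ x = a ++ w ++ b ∧ y = a ++ b) x y

variable {A M : Type*} [Monoid M]

lemma SP.inv (P : SP A M) {β : Sort*} (f : List A → β) (hf : ∀ a w b, w ∈ P.W → f (a ++ w ++ b) = f (a ++ b))
    {x y : List A} (h : P.π x = P.π y) : f x = f y := by
  have h' := P.ind x y h
  clear h
  induction h' with
  | rel x y h => obtain ⟨a, w, b, hw, rfl, rfl⟩ := h; exact hf _ _ _ hw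
  | refl x => rfl
  | symm x y _ ih => exact ih.symm
  | trans x y z h1 h2 ih1 ih2 => exact ih1.trans ih2

/-- An element with a left and a right inverse is a unit. -/
lemma isUnit_of {x l r : M} (hl : l * x = 1) (hr : x * r = 1) : IsUnit x := by
  have : l = r := left_inv_eq_right_inv hl hr
  subst this
  exact ⟨⟨x, l, hr, hl⟩, rfl⟩

lemma SP.prefix_aux (P : SP A M) {y m : M} (hm : m * y = 1) {v v' : List A} (h : P.π v = P.π v')
    (hv : ∃ v1 v2, v = v1 ++ v2 ∧ ∃ g : Mˣ, y = P.π v1 * g) :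
    ∃ v1 v2, v' = v1 ++ v2 ∧ ∃ g : Mˣ, y = P.π v1 * g := by
  have := P.inv (fun v => ∃ v1 v2, v = v1 ++ v2 ∧ ∃ g : Mˣ, y = P.π v1 * g) ?_ h
  · exact this ▸ hv
  intro a w b hw
  apply propext
  constructor
  · rintro ⟨v1, v2, h, g, hg⟩
    rw [List.append_assoc, List.append_eq_append_iff] at h
    rcases h with ⟨t, rfl, h⟩ | ⟨t, rfl, h⟩
    · rw [List.append_eq_append_iff] at h
      rcases h with ⟨s, rfl, h⟩ | ⟨s, rfl, h⟩
      · refine ⟨a ++ s, v2, by simp [h], g, ?_⟩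
        simp [hg, P.app, P.hW w hw]
      · have h1 := P.hW _ hw
        rw [P.app] at h1
        rw [hg, P.app] at hm
        have ht : IsUnit (P.π t) := by
          have h3 : m * P.π a * (P.π t * g) = 1 := by simpa [mul_assoc] using hm
          have h4 : IsUnit (P.π t * g) := by
            refine isUnit_of h3 (r := ↑g⁻¹ * P.π s) ?_
            rw [mul_assoc, Units.mul_inv_cancel_left, h1]
          simpa using h4
        obtain ⟨t', ht'⟩ := ht
        refine ⟨a, b, rfl, t' * g, ?_⟩
        simp [hg, P.app, ht', mul_assoc]
    · exact ⟨v1, t ++ b, by simp, g, hg⟩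
  · rintro ⟨v1, v2, h, g, hg⟩
    rw [List.append_eq_append_iff] at h
    rcases h with ⟨t, rfl, h⟩ | ⟨t, rfl, h⟩
    · exact ⟨a ++ w ++ t, v2, by simp [h], g, by simp [hg, P.app, P.hW w hw]⟩
    · exact ⟨v1, t ++ w ++ b, by simp, g, hg⟩

lemma SP.levi (P : SP A M) {y y' m m' c c' : M} (hm : m * y = 1) (hm' : m' * y' = 1) (h : y * c = y' * c') :
    (∃ t, y' = y * t) ∨ (∃ t, y = y' * t) := by
  obtain ⟨v, hv⟩ := P.surj (y * c)
  have key : ∀ y m c : M, m * y = 1 → y * c = P.π v →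
      ∃ v1 v2, v = v1 ++ v2 ∧ ∃ g : Mˣ, y = P.π v1 * g := by
    intro y m c hm h
    obtain ⟨a, rfl⟩ := P.surj y
    obtain ⟨b, rfl⟩ := P.surj c
    exact P.prefix_aux (v := a ++ b) hm (by rw [P.app, h]) ⟨a, b, rfl, 1, by simp⟩
  obtain ⟨v1, v2, rfl, g, hg⟩ := key y m c hm hv.symm
  obtain ⟨v1', v2', e, g', hg'⟩ := key y' m' c' hm' (by rw [hv, h])
  rw [List.append_eq_append_iff] at e
  rcases e with ⟨t, rfl, -⟩ | ⟨t, rfl, -⟩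
  · left; exact ⟨↑g⁻¹ * P.π t * g', by simp [hg, hg', P.app, mul_assoc]⟩
  · right; exact ⟨↑g'⁻¹ * P.π t * g, by simp [hg, hg', P.app, mul_assoc]⟩

/-- `m` has right inverse `y`, a left divisor of `b`. -/
def R (b m y : M) : Prop := m * y = 1 ∧ y ∣ b

lemma SP.uniq (P : SP A M) {b m y y' : M} (h : R b m y) (h' : R b m y') : y = y' := by
  obtain ⟨h1, c, h2⟩ := h
  obtain ⟨h1', c', h2'⟩ := h'
  rcases P.levi h1 h1' (h2.symm.trans h2') with ⟨t, rfl⟩ | ⟨t, rfl⟩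
  · rw [← mul_assoc, h1, one_mul] at h1'; simp [h1']
  · rw [← mul_assoc, h1', one_mul] at h1; simp [h1]

lemma R_one (b : M) : R b 1 1 := ⟨by simp, one_dvd _⟩

lemma R_unit {b m y : M} (h : R b m y) (g : Mˣ) : R b (g * m) (y * ↑g⁻¹) := by
  obtain ⟨h1, c, rfl⟩ := h
  refine ⟨?_, g * c, ?_⟩
  · rw [mul_assoc, ← mul_assoc m, h1]; simp
  · simp [mul_assoc]

lemma R_unit' {b m y : M} {g : M} (hg : IsUnit g) (h : R b (g * m) y) : R b m (y * g) := by
  obtain ⟨g, rfl⟩ := hg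
  have := R_unit h g⁻¹
  simpa using this

/-- left-invertible + extends to open implies unit. -/
lemma R_left {b m y q l : M} (hq : l * q = 1) (h : R b (q * m) y) : IsUnit q :=
  isUnit_of hq (r := m * y) (by rw [← mul_assoc]; exact h.1)

lemma SP.R_mul (P : SP A M) {a2 b2 b1 m z : M} (h2 : a2 * b2 = 1) :
    R (b2 * b1) (m * a2) z ↔ ∃ y, R b1 m y ∧ z = b2 * y := by
  constructor
  · rintro ⟨h1, c, hc⟩
    have hcan : ∀ x y, b2 * x = b2 * y → x = y := by
      intro x y h
      have := congrArg (a2 * ·) h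
      simpa [← mul_assoc, h2] using this
    rcases P.levi h2 h1 hc with ⟨t, rfl⟩ | ⟨t, rfl⟩
    · refine ⟨t, ⟨?_, c, hcan _ _ (by rw [hc, mul_assoc])⟩, rfl⟩
      rw [← h1, mul_assoc m, ← mul_assoc a2, h2, one_mul]
    · have ht : m = t := by
        calc m = m * (a2 * (z * t)) := by rw [h2, mul_one]
          _ = m * a2 * z * t := by simp only [mul_assoc]
          _ = t := by rw [h1, one_mul]
      subst ht
      have hl : m * (a2 * z) = 1 := by rw [← mul_assoc, h1]
      have hr : a2 * z * m = 1 := by rw [mul_assoc, h2]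
      refine ⟨a2 * z, ⟨hl, m * b1, ?_⟩, ?_⟩
      · rw [← mul_assoc, hr, one_mul]
      · rw [mul_assoc, hl, mul_one]
  · rintro ⟨y, ⟨h1, c, rfl⟩, rfl⟩
    refine ⟨?_, c, by simp [mul_assoc]⟩
    rw [mul_assoc, ← mul_assoc a2, h2, one_mul, h1]

lemma SP.R_suffix (P : SP A M) {b1 b2 s y u : M} (hu : u * s * b2 = 1) : R (b2 * b1) s y ↔ R b2 s y := by
  constructor
  · rintro ⟨h1, c, hc⟩
    refine ⟨h1, ?_⟩
    rcases P.levi h1 hu hc.symm with ⟨t, rfl⟩ | ⟨t, rfl⟩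
    · exact ⟨t, rfl⟩
    · have : u = t := left_inv_eq_right_inv (a := s * b2) (by rw [← mul_assoc, hu])
        (by rw [mul_assoc, h1])
      subst this
      refine ⟨s * b2, ?_⟩
      rw [mul_assoc, ← mul_assoc u, hu, mul_one]
  · rintro ⟨h1, h⟩
    exact ⟨h1, h.mul_right _⟩

lemma SP.R_letter (P : SP A M) {b p s p2 z y' t : M} (hz : R b (p * s) z) (hs : R b s y')
    (ht : R (s * z) p2 t) : ∃ y, R b (p2 * s) y := by
  obtain ⟨z1, c, hc⟩ := hz
  obtain ⟨s1, c', hc'⟩ := hs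
  obtain ⟨t1, d, hd⟩ := ht
  rcases P.levi s1 z1 (hc'.symm.trans hc) with ⟨e, rfl⟩ | ⟨e, rfl⟩
  · rw [← mul_assoc, s1, one_mul] at hd
    subst hd
    refine ⟨y' * t, ?_, d * c, by rw [hc]; simp [mul_assoc]⟩
    rw [mul_assoc, ← mul_assoc s, s1, one_mul, t1]
  · have hsz : IsUnit (s * z) := isUnit_of (l := p) (by rw [← mul_assoc, z1])
      (r := e) (by rw [mul_assoc, s1])
    obtain ⟨g, hg⟩ := hsz
    have htu : IsUnit t := isUnit_of t1 (r := d * ↑g⁻¹) (by rw [← mul_assoc, ← hd, ← hg]; simp)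
    obtain ⟨t, rfl⟩ := htu
    have hp : p2 = ↑t⁻¹ := Units.eq_inv_of_mul_eq_one_right t1
    exact ⟨_, hp ▸ R_unit ⟨s1, c', hc'⟩ t⁻¹⟩

open Monoid (Coprod)

/-- The target monoid. -/
abbrev K (M : Type*) [Monoid M] := Coprod Mˣ (FreeMonoid (M × M))

open Classical in
/-- Image of one step. -/
noncomputable def kap (c : M × M) : K M :=
  if h : IsUnit c.1 then Coprod.inl h.unit else Coprod.inr (FreeMonoid.of c)

lemma kap_unit (g : Mˣ) (y : M) : kap ((g : M), y) = Coprod.inl g := by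
  have h : IsUnit (((g : M), y) : M × M).1 := g.isUnit
  rw [kap, dif_pos h]
  congr 1
  ext; rfl

lemma kap_not {c : M × M} (h : ¬ IsUnit c.1) : kap c = Coprod.inr (FreeMonoid.of c) := by
  rw [kap, dif_neg h]

/-- The quotient of two consecutive open positions. -/
def quo (n n' : M × M) : M × M := (n.1 * n'.2, n'.1 * n.2)

open Classical in
/-- The right inverse of `m` dividing `b`. -/
noncomputable def Y (b m : M) : M := if h : ∃ y, R b m y then h.choose else 1

lemma Y_spec {b m : M} (h : ∃ y, R b m y) : R b m (Y b m) := by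
  rw [Y, dif_pos h]; exact h.choose_spec

lemma SP.Y_eq (P : SP A M) {b m y : M} (h : R b m y) : Y b m = y :=
  P.uniq (Y_spec ⟨y, h⟩) h

open Classical in
/-- The parse of a word. -/
noncomputable def SP.E (P : SP A M) (b : M) : List A → (M × M) × K M
  | [] => ((1, 1), 1)
  | a :: s =>
    if ∃ y, R b (P.π (a :: s)) y then
      ((P.π (a :: s), Y b (P.π (a :: s))),
        kap (quo (P.π (a :: s), Y b (P.π (a :: s))) (SP.E P b s).1) * (SP.E P b s).2)
    else SP.E P b s

lemma SP.E_pos (P : SP A M) {b y : M} {a : A} {s : List A} (h : R b (P.π (a :: s)) y) :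
    P.E b (a :: s) = ((P.π (a :: s), y), kap (quo (P.π (a :: s), y) (P.E b s).1) * (P.E b s).2) := by
  rw [SP.E, if_pos ⟨y, h⟩, P.Y_eq h]

lemma SP.E_neg (P : SP A M) {b : M} {a : A} {s : List A} (h : ¬ ∃ y, R b (P.π (a :: s)) y) :
    P.E b (a :: s) = P.E b s := by
  rw [SP.E, if_neg h]

lemma SP.E_head (P : SP A M) {b y : M} {s : List A} (h : R b (P.π s) y) :
    (P.E b s).1 = (P.π s, y) := by
  cases s with
  | nil =>
    rw [P.nil] at h
    rw [P.nil, P.uniq h (R_one b)]; rfl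
  | cons a s => rw [P.E_pos h]

lemma SP.cons (P : SP A M) (a : A) (s : List A) : P.π (a :: s) = P.π [a] * P.π s := by
  rw [← P.app]; rfl

lemma SP.E_unit (P : SP A M) {b y : M} {z : List A} (hz : R b (P.π z) y) (q : List A) (l : M)
    (hl : l * P.π q = 1) : ∃ g : Mˣ, P.E b (q ++ z) =
      ((g * P.π z, y * ↑g⁻¹), Coprod.inl g * (P.E b z).2) ∧ (IsUnit (P.π q) → P.π q = g) := by
  induction q generalizing l with
  | nil =>
    refine ⟨1, ?_, fun _ => by simp [P.nil]⟩
    simp [← P.E_head hz]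
  | cons a q ih =>
    obtain ⟨g, hg, -⟩ := ih (l * P.π [a]) (by rw [mul_assoc, ← P.cons, hl])
    by_cases hu : IsUnit (P.π (a :: q))
    · obtain ⟨h, hh⟩ := hu
      have e : P.π (a :: (q ++ z)) = h * P.π z := by rw [hh, ← P.app]; rfl
      have hR : R b (P.π (a :: (q ++ z))) (y * ↑h⁻¹) := by
        rw [e]; exact R_unit hz h
      refine ⟨h, ?_, fun _ => hh.symm⟩
      rw [List.cons_append, P.E_pos hR, hg, e]
      have : quo ((h : M) * P.π z, y * ↑h⁻¹) ((g : M) * P.π z, y * ↑g⁻¹)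
          = (((h * g⁻¹ : Mˣ) : M), (g : M) * P.π z * (y * ↑h⁻¹)) := by
        simp only [quo, Units.val_mul]
        congr 1
        rw [mul_assoc, ← mul_assoc _ y, hz.1, one_mul]
      simp only
      rw [this, kap_unit, ← mul_assoc, ← map_mul]
      simp
    · refine ⟨g, ?_, fun h => absurd h hu⟩
      rw [List.cons_append, P.E_neg, hg]
      rintro ⟨y, hy⟩
      apply hu
      rw [← List.cons_append, P.app] at hy
      exact R_left hl hy

lemma SP.E_unit_neg (P : SP A M) {b : M} {z : List A} (hz : ¬ ∃ y, R b (P.π z) y) (q : List A)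
    (l : M) (hl : l * P.π q = 1) : P.E b (q ++ z) = P.E b z := by
  induction q generalizing l with
  | nil => rfl
  | cons a q ih =>
    have := ih (l * P.π [a]) (by rw [mul_assoc, ← P.cons, hl])
    rw [List.cons_append, P.E_neg, this]
    rintro ⟨y, hy⟩
    rw [← List.cons_append, P.app] at hy
    exact hz ⟨_, R_unit' (R_left hl hy) hy⟩

lemma SP.E_insert (P : SP A M) (b : M) (x w z : List A) (hw : P.π w = 1) :
    P.E b (x ++ w ++ z) = P.E b (x ++ z) := by
  induction x with
  | nil =>
    by_cases hz : ∃ y, R b (P.π z) y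
    · obtain ⟨y, hy⟩ := hz
      obtain ⟨g, hg, hg'⟩ := P.E_unit hy w 1 (by simp [hw])
      have hg1 : g = 1 := by
        ext; rw [← hg' (by simp [hw]), hw]; rfl
      subst hg1
      simp only [List.nil_append]
      rw [hg]
      simp [← P.E_head hy]
    · simpa using P.E_unit_neg hz w 1 (by simp [hw])
  | cons a x ih =>
    have e : P.π (a :: (x ++ w ++ z)) = P.π (a :: (x ++ z)) := by
      rw [P.cons, P.cons a (x ++ z)]; simp [P.app, hw]
    simp only [List.cons_append]
    by_cases hz : ∃ y, R b (P.π (a :: (x ++ z))) y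
    · obtain ⟨y, hy⟩ := hz
      rw [P.E_pos hy, P.E_pos (e ▸ hy), ih, e]
    · rw [P.E_neg hz, P.E_neg (e ▸ hz), ih]

lemma SP.E_congr (P : SP A M) (b : M) {x y : List A} (h : P.π x = P.π y) : P.E b x = P.E b y :=
  P.inv (P.E b) (fun a w z hw => P.E_insert b a w z (P.hW w hw)) h

lemma SP.E_suffix (P : SP A M) (b1 b2 : M) (s : List A) (u : M) (hu : u * P.π s * b2 = 1) :
    P.E (b2 * b1) s = P.E b2 s := by
  induction s generalizing u with
  | nil => rfl
  | cons a s ih =>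
    have := ih (u * P.π [a]) (by rw [mul_assoc u, ← P.cons, hu])
    by_cases hz : ∃ y, R b2 (P.π (a :: s)) y
    · obtain ⟨y, hy⟩ := hz
      rw [P.E_pos hy, P.E_pos ((P.R_suffix hu).2 hy), this]
    · rw [P.E_neg hz, P.E_neg (fun ⟨y, hy⟩ => hz ⟨y, (P.R_suffix hu).1 hy⟩), this]

lemma SP.E_mul (P : SP A M) (b1 b2 : M) (u1 u2 : List A) (h2 : P.π u2 * b2 = 1) :
    P.E (b2 * b1) (u1 ++ u2) = (((P.E b1 u1).1.1 * P.π u2, b2 * (P.E b1 u1).1.2),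
      (P.E b1 u1).2 * (P.E b2 u2).2) := by
  induction u1 with
  | nil =>
    rw [List.nil_append, P.E_suffix b1 b2 u2 1 (by simp [h2])]
    have : (P.E b2 u2).1 = (P.π u2, b2) := P.E_head ⟨h2, dvd_rfl⟩
    simp [SP.E, ← this]
  | cons a u1 ih =>
    have e : P.π (a :: (u1 ++ u2)) = P.π (a :: u1) * P.π u2 := by
      rw [← P.app]; rfl
    rw [List.cons_append]
    by_cases hz : ∃ y, R b1 (P.π (a :: u1)) y
    · obtain ⟨y, hy⟩ := hz
      have hy' : R (b2 * b1) (P.π (a :: (u1 ++ u2))) (b2 * y) := by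
        rw [e, P.R_mul h2]; exact ⟨y, hy, rfl⟩
      rw [P.E_pos hy, P.E_pos hy', ih, e]
      have : ∀ n n' : M × M, quo (n.1 * P.π u2, b2 * n.2) (n'.1 * P.π u2, b2 * n'.2) = quo n n' := by
        intro n n'
        have h3 : ∀ t, P.π u2 * (b2 * t) = t := fun t => by rw [← mul_assoc, h2, one_mul]
        simp [quo, mul_assoc, h3]
      have := this (P.π (a :: u1), y) (P.E b1 u1).1
      simp only at this ⊢
      rw [this, mul_assoc]
    · rw [P.E_neg hz, P.E_neg, ih]
      rintro ⟨y, hy⟩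
      rw [e, P.R_mul h2] at hy
      obtain ⟨y, hy, -⟩ := hy
      exact hz ⟨y, hy⟩

/-- Structure of the parse. -/
lemma SP.E_struct (P : SP A M) (b : M) (s : List A) : ∃ p s' y, s = p ++ s' ∧
    (P.E b s).1 = (P.π s', y) ∧ R b (P.π s') y ∧
    ∀ p1 p2, p = p1 ++ p2 → p2 ≠ [] → ¬ ∃ y, R b (P.π (p2 ++ s')) y := by
  induction s with
  | nil =>
    refine ⟨[], [], 1, rfl, by simp [SP.E, P.nil], by rw [P.nil]; exact R_one b, ?_⟩
    intro p1 p2 h h2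
    simp at h; exact absurd h.2 h2
  | cons a s ih =>
    by_cases hz : ∃ y, R b (P.π (a :: s)) y
    · obtain ⟨y, hy⟩ := hz
      refine ⟨[], a :: s, y, rfl, P.E_head hy, hy, ?_⟩
      intro p1 p2 h h2
      simp at h; exact absurd h.2 h2
    · obtain ⟨p, s', y, rfl, h1, h2, h3⟩ := ih
      refine ⟨a :: p, s', y, rfl, by rw [P.E_neg hz, h1], h2, ?_⟩
      intro p1 p2 h hp2
      cases p1 with
      | nil => simp at h; subst h; simpa using hz
      | cons c p1 =>
        simp at h
        exact h3 p1 p2 h.2 hp2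

/-- word of an element -/
noncomputable def SP.wd (P : SP A M) (m : M) : List A := (P.surj m).choose

lemma SP.wd_spec (P : SP A M) (m : M) : P.π (P.wd m) = m := (P.surj m).choose_spec

/-- The map from pairs to `K`. -/
noncomputable def SP.Phi (P : SP A M) (c : M × M) : K M := (P.E c.2 (P.wd c.1)).2

lemma SP.Phi_eq (P : SP A M) (u : List A) (b : M) : P.Phi (P.π u, b) = (P.E b u).2 := by
  rw [SP.Phi, P.E_congr]; exact P.wd_spec _

lemma SP.Phi_mul (P : SP A M) (a1 b1 a2 b2 : M) (h2 : a2 * b2 = 1) :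
    P.Phi (a1 * a2, b2 * b1) = P.Phi (a1, b1) * P.Phi (a2, b2) := by
  obtain ⟨u1, rfl⟩ := P.surj a1
  obtain ⟨u2, rfl⟩ := P.surj a2
  rw [← P.app, P.Phi_eq, P.Phi_eq, P.Phi_eq, P.E_mul _ _ _ _ h2]

lemma SP.Phi_unit (P : SP A M) (g : Mˣ) : P.Phi (↑g, ↑g⁻¹) = Coprod.inl g := by
  obtain ⟨u, hu⟩ := P.surj g
  rw [← hu, P.Phi_eq]
  have h1 : R (↑g⁻¹ : M) (P.π []) 1 := by rw [P.nil]; exact R_one _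
  obtain ⟨h, hh, hh'⟩ := P.E_unit h1 u (↑g⁻¹) (by rw [hu]; simp)
  rw [List.append_nil] at hh
  have : g = h := by ext; rw [← hu]; exact hh' (by rw [hu]; exact g.isUnit)
  subst this
  rw [hh]; simp [SP.E]

/-- Facts about one step. -/
lemma SP.step (P : SP A M) {b y : M} {a : A} {s : List A} (h : R b (P.π (a :: s)) y) :
    let c := quo (P.π (a :: s), y) (P.E b s).1
    c.1 * c.2 = 1 ∧ c.1 * (P.E b s).1.1 = P.π (a :: s) ∧ (P.E b s).1.2 * c.2 = y ∧
      P.Phi c = kap c := by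
  obtain ⟨p, s', y', rfl, h1, h2, h3⟩ := P.E_struct b s
  rw [h1]
  have e : P.π (a :: (p ++ s')) = P.π (a :: p) * P.π s' := by rw [← P.app]; rfl
  have c1 : P.π (a :: (p ++ s')) * y' = P.π (a :: p) := by rw [e, mul_assoc, h2.1, mul_one]
  have hc : quo (P.π (a :: (p ++ s')), y) (P.π s', y') = (P.π (a :: p), P.π s' * y) := by
    simp only [quo]; rw [c1]
  have hR : P.π (a :: p) * (P.π s' * y) = 1 := by rw [← mul_assoc, ← e, h.1]
  simp only [hc]
  refine ⟨hR, e.symm, ?_, ?_⟩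
  · obtain ⟨k1, c, hc⟩ := h
    obtain ⟨k2, c', hc'⟩ := h2
    rcases P.levi k1 k2 (hc.symm.trans hc') with ⟨t, rfl⟩ | ⟨t, rfl⟩
    · have : P.π (a :: p) = t := left_inv_eq_right_inv hR (by rw [mul_assoc, k2])
      rw [← this, mul_assoc, hR, mul_one]
    · rw [← mul_assoc (P.π s'), k2, one_mul]
  · rw [P.Phi_eq]
    have hno : ∀ p1 p2, p = p1 ++ p2 → P.E (P.π s' * y) p2 = ((1, 1), 1) := by
      intro p1 p2 hp
      induction p2 generalizing p1 with
      | nil => rfl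
      | cons d p2 ih =>
        rw [P.E_neg, ih (p1 ++ [d]) (by simp [hp])]
        rintro ⟨t, ht⟩
        apply h3 p1 (d :: p2) hp (by simp)
        rw [P.app]
        exact P.R_letter (e ▸ h) h2 ht
    rw [P.E_pos (y := P.π s' * y) ⟨hR, dvd_rfl⟩, hno [] p rfl]
    simp [quo]

/-- The map back. -/
noncomputable def Psi (M : Type*) [Monoid M] : K M →* M × Mᵐᵒᵖ :=
  Coprod.lift
    { toFun := fun g => ((g : M), MulOpposite.op ((g⁻¹ : Mˣ) : M))
      map_one' := by simp
      map_mul' := by intro x y; simp }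
    (FreeMonoid.lift (fun c => (c.1, MulOpposite.op c.2)))

lemma Psi_inl (g : Mˣ) : Psi M (Coprod.inl g) = ((g : M), MulOpposite.op ((g⁻¹ : Mˣ) : M)) := rfl

lemma Psi_of (c : M × M) :
    Psi M (Coprod.inr (FreeMonoid.of c)) = (c.1, MulOpposite.op c.2) := by
  rw [Psi, Coprod.lift_apply_inr, FreeMonoid.lift_eval_of]

lemma Psi_kap {c : M × M} (h : c.1 * c.2 = 1) : Psi M (kap c) = (c.1, MulOpposite.op c.2) := by
  by_cases hu : IsUnit c.1
  · obtain ⟨x, y⟩ := c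
    obtain ⟨g, rfl⟩ := hu
    rw [kap_unit, Psi_inl, Units.eq_inv_of_mul_eq_one_left h]
  · rw [kap_not hu, Psi_of]

lemma SP.Psi_E (P : SP A M) (b : M) (s : List A) :
    Psi M (P.E b s).2 = ((P.E b s).1.1, MulOpposite.op (P.E b s).1.2) := by
  induction s with
  | nil => simp [SP.E]; rfl
  | cons a s ih =>
    by_cases hz : ∃ y, R b (P.π (a :: s)) y
    · obtain ⟨y, hy⟩ := hz
      obtain ⟨h1, h2, h3, -⟩ := P.step hy
      rw [P.E_pos hy, map_mul, Psi_kap h1, ih]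
      simp only [Prod.mk_mul_mk, ← MulOpposite.op_mul]
      rw [h2, h3]
    · rw [P.E_neg hz, ih]

lemma SP.Psi_Phi (P : SP A M) {a b : M} (h : a * b = 1) :
    Psi M (P.Phi (a, b)) = (a, MulOpposite.op b) := by
  obtain ⟨u, rfl⟩ := P.surj a
  rw [P.Phi_eq, P.Psi_E, P.E_head (y := b) ⟨h, dvd_rfl⟩]

/-- The basis. -/
def SP.X (P : SP A M) : Set (M × M) := {c | c.1 * c.2 = 1 ∧ P.Phi c = Coprod.inr (FreeMonoid.of c)}

lemma SP.E_mem (P : SP A M) (b : M) (s : List A) : (P.E b s).2 ∈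
    Submonoid.closure (Set.range (Coprod.inl : Mˣ →* K M) ∪
      (fun c => (Coprod.inr (FreeMonoid.of c) : K M)) '' P.X) := by
  induction s with
  | nil => exact one_mem _
  | cons a s ih =>
    by_cases hz : ∃ y, R b (P.π (a :: s)) y
    · obtain ⟨y, hy⟩ := hz
      obtain ⟨h1, h2, h3, h4⟩ := P.step hy
      rw [P.E_pos hy]
      refine mul_mem (Submonoid.subset_closure ?_) ih
      generalize quo (P.π (a :: s), y) (P.E b s).1 = c at *
      by_cases hu : IsUnit c.1
      · left
        obtain ⟨x, y⟩ := c
        obtain ⟨g, rfl⟩ := hu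
        exact ⟨g, (kap_unit _ _).symm⟩
      · right
        rw [kap_not hu] at h4 ⊢
        exact ⟨c, ⟨h1, h4⟩, rfl⟩
    · rw [P.E_neg hz]; exact ih

/-- Splits of relators. -/
def SP.splits (P : SP A M) : Set (M × Mᵐᵒᵖ) :=
  {c | ∃ p q, p ++ q ∈ P.W ∧ c = (P.π p, MulOpposite.op (P.π q))}

lemma SP.gen (P : SP A M) {a b : M} (h : a * b = 1) :
    (a, MulOpposite.op b) ∈ Submonoid.closure P.splits := by
  obtain ⟨u, rfl⟩ := P.surj a
  obtain ⟨v, rfl⟩ := P.surj b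
  have key := P.inv (fun z => ∀ u v, z = u ++ v →
    (P.π u, MulOpposite.op (P.π v)) ∈ Submonoid.closure P.splits) ?_
    (x := []) (y := u ++ v) (by rw [P.app, h, P.nil])
  · refine (cast key ?_) u v rfl
    intro u v h
    simp at h
    obtain ⟨rfl, rfl⟩ := h
    rw [P.nil]; exact one_mem _
  intro a w b hw
  apply propext
  constructor
  · intro H u v h
    rw [List.append_eq_append_iff] at h
    rcases h with ⟨t, rfl, rfl⟩ | ⟨t, rfl, rfl⟩
    · simpa [P.app, P.hW w hw] using H (a ++ w ++ t) v (by simp)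
    · simpa [P.app, P.hW w hw] using H u (t ++ w ++ b) (by simp)
  · intro H u v h
    rw [List.append_assoc, List.append_eq_append_iff] at h
    rcases h with ⟨t, rfl, h⟩ | ⟨t, rfl, rfl⟩
    · rw [List.append_eq_append_iff] at h
      rcases h with ⟨s, rfl, rfl⟩ | ⟨s, rfl, rfl⟩
      · simpa [P.app, P.hW w hw] using H (a ++ s) v (by simp)
      · have h1 := H a b rfl
        have := mul_mem h1 (Submonoid.subset_closure (show (P.π t, MulOpposite.op (P.π s)) ∈ P.splits
          from ⟨t, s, hw, rfl⟩))
        simpa [P.app] using this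
    · simpa [P.app, P.hW w hw] using H u (t ++ b) (by simp)

lemma SP.splits_finite (P : SP A M) (hf : P.W.Finite) : P.splits.Finite := by
  have : P.splits ⊆ ⋃ w ∈ P.W, (fun j => (P.π (w.take j), MulOpposite.op (P.π (w.drop j)))) ''
      (Set.Iic w.length) := by
    rintro c ⟨p, q, hw, rfl⟩
    simp only [Set.mem_iUnion]
    exact ⟨_, hw, p.length, by simp, by simp⟩
  exact (hf.biUnion fun w _ => (Set.finite_Iic _).image _).subset this

lemma SP.X_finite (P : SP A M) (hf : P.W.Finite) : P.X.Finite := by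
  let ltrs : K M → Set (M × M) := fun k => {c | c ∈ FreeMonoid.toList (Coprod.snd k)}
  have hfin : (⋃ c ∈ P.splits, ltrs (P.Phi (c.1, c.2.unop))).Finite :=
    (P.splits_finite hf).biUnion fun c _ => List.finite_toSet _
  refine hfin.subset ?_
  set Z := ⋃ c ∈ P.splits, ltrs (P.Phi (c.1, c.2.unop)) with hZ
  have key : ∀ c ∈ Submonoid.closure P.splits, c.1 * c.2.unop = 1 ∧
      ltrs (P.Phi (c.1, c.2.unop)) ⊆ Z := by
    intro c hc
    induction hc using Submonoid.closure_induction with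
    | mem c h =>
      refine ⟨?_, Set.subset_biUnion_of_mem (u := fun c => ltrs (P.Phi (c.1, c.2.unop))) h⟩
      obtain ⟨p, q, hw, rfl⟩ := h
      simpa [P.app] using P.hW _ hw
    | one =>
      refine ⟨by simp, ?_⟩
      have := P.Phi_unit 1
      simp at this
      simp [this, ltrs]
    | mul x y _ _ hx hy =>
      refine ⟨?_, ?_⟩
      · simp only [Prod.fst_mul, Prod.snd_mul, MulOpposite.unop_mul]
        rw [mul_assoc, ← mul_assoc y.1, hy.1, one_mul, hx.1]
      · simp only [Prod.fst_mul, Prod.snd_mul, MulOpposite.unop_mul]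
        rw [P.Phi_mul _ _ _ _ hy.1]
        intro c hc
        simp only [ltrs, map_mul, FreeMonoid.toList_mul, List.mem_append, Set.mem_ofPred_eq] at hc
        rcases hc with hc | hc
        · exact hx.2 hc
        · exact hy.2 hc
  rintro ⟨a, b⟩ ⟨h1, h2⟩
  have := (key _ (P.gen h1)).2
  simp only [MulOpposite.unop_op] at this
  rw [h2] at this
  apply this
  simp [ltrs]

theorem SP.main (P : SP A M) (hf : P.W.Finite) (N : Submonoid (M × Mᵐᵒᵖ))
    (hN : ∀ p, p ∈ N ↔ p.1 * p.2.unop = 1) :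
    ∃ n : ℕ, Nonempty (N ≃* Coprod Mˣ (FreeMonoid (Fin n))) := by
  classical
  have hX := P.X_finite hf
  have : Fintype P.X := hX.fintype
  obtain ⟨e⟩ := Fintype.truncEquivFin P.X
  refine ⟨Fintype.card P.X, ⟨?_⟩⟩
  let Φ : N →* K M :=
    { toFun := fun x => P.Phi (x.1.1, x.1.2.unop)
      map_one' := by simpa using P.Phi_unit 1
      map_mul' := by
        intro x y
        exact P.Phi_mul _ _ _ _ ((hN _).1 y.2) }
  let ι : Coprod Mˣ (FreeMonoid (Fin (Fintype.card P.X))) →* K M :=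
    Coprod.map (MonoidHom.id _) (FreeMonoid.map fun j => ((e.symm j : P.X) : M × M))
  let ρ : K M →* Coprod Mˣ (FreeMonoid (Fin (Fintype.card P.X))) :=
    Coprod.lift Coprod.inl (FreeMonoid.lift fun c =>
      if h : c ∈ P.X then Coprod.inr (FreeMonoid.of (e ⟨c, h⟩)) else 1)
  have hι : ∀ k, (Psi M (ι k)) ∈ N := by
    intro k
    induction k using Coprod.induction_on with
    | inl g => rw [hN]; simp [ι, Psi_inl]
    | inr x =>
      induction x using FreeMonoid.inductionOn with
      | one => simp
      | of j => 
        rw [hN]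
        simp only [ι, Coprod.map_apply_inr, FreeMonoid.map_of, Psi_of]
        exact (e.symm j).2.1
      | mul x y hx hy => rw [map_mul, map_mul, map_mul]; exact mul_mem hx hy
    | mul x y hx hy => rw [map_mul, map_mul]; exact mul_mem hx hy
  let Ψ : Coprod Mˣ (FreeMonoid (Fin (Fintype.card P.X))) →* N :=
    ((Psi M).comp ι).codRestrict N hι
  have h1 : ((ρ.comp Φ).comp Ψ) = MonoidHom.id _ := by
    apply Coprod.hom_ext
    · ext1 g
      have : Φ (Ψ (Coprod.inl g)) = Coprod.inl g := P.Phi_unit g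
      simp only [MonoidHom.comp_apply, this]
      rfl
    · apply FreeMonoid.hom_eq
      intro j
      have h3 : ((Ψ (Coprod.inr (FreeMonoid.of j)) : N) : M × Mᵐᵒᵖ) =
          ((e.symm j : M × M).1, MulOpposite.op (e.symm j : M × M).2) := Psi_of _
      have : Φ (Ψ (Coprod.inr (FreeMonoid.of j))) =
          Coprod.inr (FreeMonoid.of ((e.symm j : P.X) : M × M)) := by
        change P.Phi _ = _
        rw [h3]
        exact (e.symm j).2.2
      simp only [MonoidHom.comp_apply, this]
      simp [ρ]
  have hfix : ∀ k ∈ Submonoid.closure (Set.range (Coprod.inl : Mˣ →* K M) ∪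
      (fun c => (Coprod.inr (FreeMonoid.of c) : K M)) '' P.X), ι (ρ k) = k := by
    intro k hk
    induction hk using Submonoid.closure_induction with
    | mem k h =>
      rcases h with ⟨g, rfl⟩ | ⟨c, hc, rfl⟩
      · rfl
      · simp [ρ, ι, hc]
    | one => simp
    | mul x y _ _ hx hy => rw [map_mul, map_mul, hx, hy]
  have h2 : (Ψ.comp (ρ.comp Φ)) = MonoidHom.id _ := by
    ext1 x
    apply Subtype.ext
    change Psi M (ι (ρ (Φ x))) = x.1
    rw [hfix (Φ x) (P.E_mem _ _)]
    exact P.Psi_Phi ((hN _).1 x.2)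
  exact (ρ.comp Φ).toMulEquiv Ψ h2 h1

end SpecialN

/-- Let `M = ⟨A ∣ w₁ = 1, …, w_k = 1⟩` be a finitely presented special monoid, `Mˣ` its
group of units, and `N` the submonoid of `M × Mᵐᵒᵖ` consisting of the pairs `(u, v)`
with `u * v = 1` in `M`.  Then `N` is isomorphic to the free product (monoid coproduct)
of `Mˣ` with a free monoid of finite rank. -/
theorem special_monoid_N_free_product {A : Type*} [Fintype A] {k : ℕ}
    (w : Fin k → FreeMonoid A)
    (rel : FreeMonoid A → FreeMonoid A → Prop)
    (hrel : ∀ x y, rel x y ↔ ∃ i : Fin k, x = w i ∧ y = 1)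
    (N : Submonoid (PresentedMonoid rel × (PresentedMonoid rel)ᵐᵒᵖ))
    (hN : ∀ p : PresentedMonoid rel × (PresentedMonoid rel)ᵐᵒᵖ,
      p ∈ N ↔ p.1 * p.2.unop = 1) :
    ∃ n : ℕ, Nonempty
      (N ≃* Monoid.Coprod (PresentedMonoid rel)ˣ (FreeMonoid (Fin n))) := by
  have hcon : ∀ x y : FreeMonoid A, PresentedMonoid.mk rel x = PresentedMonoid.mk rel y →
      Relation.EqvGen (fun x y : List A => ∃ a v b : List A, v ∈ (Set.range w : Set (List A)) ∧ x = a ++ v ++ b ∧ y = a ++ b)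
        x y := by
    intro x y h
    rw [PresentedMonoid.mk_eq_mk_iff] at h
    let S : List A → List A → Prop :=
      fun x y => ∃ a v b : List A, v ∈ (Set.range w : Set (List A)) ∧ x = a ++ v ++ b ∧ y = a ++ b
    have hl : ∀ c x y, Relation.EqvGen S x y → Relation.EqvGen S (c ++ x) (c ++ y) := by
      intro c x y h
      induction h with
      | rel x y h =>
        obtain ⟨a, v, b, hv, rfl, rfl⟩ := h
        exact .rel _ _ ⟨c ++ a, v, b, hv, by simp, by simp⟩
      | refl x => exact .refl _
      | symm x y _ ih => exact ih.symm
      | trans x y z _ _ ih1 ih2 => exact ih1.trans _ _ _ ih2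
    have hr : ∀ c x y, Relation.EqvGen S x y → Relation.EqvGen S (x ++ c) (y ++ c) := by
      intro c x y h
      induction h with
      | rel x y h =>
        obtain ⟨a, v, b, hv, rfl, rfl⟩ := h
        exact .rel _ _ ⟨a, v, b ++ c, hv, by simp, by simp⟩
      | refl x => exact .refl _
      | symm x y _ ih => exact ih.symm
      | trans x y z _ _ ih1 ih2 => exact ih1.trans _ _ _ ih2
    change ConGen.Rel rel x y at h
    change Relation.EqvGen S x y
    induction h with
    | of x y h =>
      obtain ⟨i, rfl, rfl⟩ := (hrel _ _).1 h
      exact .rel _ _ ⟨[], w i, [], ⟨i, rfl⟩, (List.append_nil _).symm, rfl⟩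
    | refl x => exact .refl _
    | symm _ ih => exact ih.symm
    | trans _ _ ih1 ih2 => exact ih1.trans _ _ _ ih2
    | mul _ _ ih1 ih2 => exact (hr _ _ _ ih1).trans _ _ _ (hl _ _ _ ih2)
  let P : SpecialN.SP A (PresentedMonoid rel) :=
    { π := fun l => PresentedMonoid.mk rel (FreeMonoid.ofList l)
      nil := map_one _
      app := fun x y => map_mul (PresentedMonoid.mk rel) (FreeMonoid.ofList x) (FreeMonoid.ofList y)
      surj := PresentedMonoid.surjective_mk
      W := Set.range w
      hW := by
        rintro _ ⟨i, rfl⟩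
        exact PresentedMonoid.mk_eq_mk_of_rel ((hrel _ _).2 ⟨i, rfl, rfl⟩)
      ind := hcon }
  exact P.main (Set.finite_range w) N hN
end

section
/- Let M be a finitely presented special monoid ⟨A ∣ w₁ = 1, …, w_k = 1⟩ and let N be the submonoid of M × Mᵒᵖ consisting of the pairs (u, v) with u * v = 1 in M. Then M × M is a free right N-set under the action (m₁, m₂)·(n₁, n₂) = (m₁ n₁, n₂ m₂): there exists a subset B ⊆ M × M such that every element of M × M can be written in exactly one way as (b₁ n₁, n₂ b₂) with (b₁, b₂) ∈ B and (n₁, n₂) ∈ N. -/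
namespace SpecialMonoidFree

open Relation

/-- One deletion of a factor representing the identity. -/
def DelStep {A M : Type*} [Monoid M] (π : List A → M) (u v : List A) : Prop :=
  ∃ s w t, π w = 1 ∧ u = s ++ w ++ t ∧ v = s ++ t

/-- `M` is generated by `A`, and equality in `M` is generated by deletions of words equal to 1. -/
structure IsSpecial {A M : Type*} [Monoid M] (π : List A → M) : Prop where
  nil : π [] = 1
  append : ∀ x y, π (x ++ y) = π x * π y
  surj : Function.Surjective π
  eqv : ∀ x y, π x = π y → EqvGen (DelStep π) x y

variable {A M : Type*} [Monoid M]

lemma isUnit_of_left_right {a b c : M} (h1 : a * b = 1) (h2 : b * c = 1) : IsUnit b := by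
  have : a = c := left_inv_eq_right_inv h1 h2
  subst this
  exact ⟨⟨b, a, h2, h1⟩, rfl⟩

lemma split_step {π : List A → M} (h : IsSpecial π) {u v : List A}
    (hs : DelStep π u v ∨ DelStep π v u) (x y : List A) (hu : u = x ++ y)
    (hy : ∃ r, π y * r = 1) :
    ∃ (x' y' : List A) (g : Mˣ), v = x' ++ y' ∧ π x' = π x * g ∧ π y = g * π y' := by
  rcases hs with ⟨s, w, t, hw, h1, h2⟩ | ⟨s, w, t, hw, h1, h2⟩
  · rw [hu, List.append_assoc] at h1
    rcases List.append_eq_append_iff.1 h1 with ⟨p, rfl, rfl⟩ | ⟨p, rfl, hp⟩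
    · refine ⟨x, p ++ t, 1, by simp [h2], by simp, ?_⟩
      simp [h.append, hw]
    · rcases List.append_eq_append_iff.1 hp with ⟨q, rfl, rfl⟩ | ⟨q, rfl, rfl⟩
      · -- p = w ++ q
        refine ⟨s ++ q, y, 1, by simp [h2], ?_, by simp⟩
        simp [h.append, hw]
      · -- w = p ++ q, y = q ++ t
        obtain ⟨r, hr⟩ := hy
        rw [h.append] at hw
        have hq : IsUnit (π q) := by
          refine isUnit_of_left_right hw (c := π t * r) ?_
          rw [← hr, h.append, mul_assoc]
        obtain ⟨g, hg⟩ := hq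
        refine ⟨s, t, g, h2, ?_, ?_⟩
        · rw [hg, h.append, mul_assoc, hw, mul_one]
        · rw [hg, h.append]
  · rw [hu] at h2
    rcases List.append_eq_append_iff.1 h2 with ⟨p, rfl, rfl⟩ | ⟨p, rfl, rfl⟩
    · refine ⟨x, p ++ w ++ t, 1, by simp [h1], by simp, ?_⟩
      simp [h.append, hw]
    · refine ⟨s ++ w ++ p, y, 1, by simp [h1], ?_, by simp⟩
      simp [h.append, hw]

lemma split_eqv {π : List A → M} (h : IsSpecial π) {u v : List A}
    (hs : EqvGen (DelStep π) u v) :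
    (∀ x y, u = x ++ y → (∃ r, π y * r = 1) →
      ∃ (x' y' : List A) (g : Mˣ), v = x' ++ y' ∧ π x' = π x * g ∧ π y = g * π y') ∧
    (∀ x y, v = x ++ y → (∃ r, π y * r = 1) →
      ∃ (x' y' : List A) (g : Mˣ), u = x' ++ y' ∧ π x' = π x * g ∧ π y = g * π y') := by
  have tr : ∀ {u v z : List A},
      (∀ x y, u = x ++ y → (∃ r, π y * r = 1) →
      ∃ (x' y' : List A) (g : Mˣ), v = x' ++ y' ∧ π x' = π x * g ∧ π y = g * π y') →
      (∀ x y, v = x ++ y → (∃ r, π y * r = 1) →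
      ∃ (x' y' : List A) (g : Mˣ), z = x' ++ y' ∧ π x' = π x * g ∧ π y = g * π y') →
      (∀ x y, u = x ++ y → (∃ r, π y * r = 1) →
      ∃ (x' y' : List A) (g : Mˣ), z = x' ++ y' ∧ π x' = π x * g ∧ π y = g * π y') := by
    intro u v z h1 h2 x y hu hy
    obtain ⟨x', y', g, e1, e2, e3⟩ := h1 x y hu hy
    obtain ⟨r, hr⟩ := hy
    have hy' : ∃ r, π y' * r = 1 := by
      refine ⟨r * g, ?_⟩
      rw [e3, mul_assoc] at hr
      have : π y' * r = (g⁻¹ : Mˣ) := by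
        rw [← mul_one ((g⁻¹ : Mˣ) : M), ← hr]; simp
      rw [← mul_assoc, this]; simp
    obtain ⟨x'', y'', g', f1, f2, f3⟩ := h2 x' y' e1 hy'
    refine ⟨x'', y'', g * g', f1, ?_, ?_⟩
    · rw [f2, e2]; simp [mul_assoc]
    · rw [e3, f3]; simp [mul_assoc]
  induction hs with
  | rel u v hs => exact ⟨split_step h (Or.inl hs), split_step h (Or.inr hs)⟩
  | refl u =>
    refine ⟨fun x y e _ => ⟨x, y, 1, e, by simp, by simp⟩,
      fun x y e _ => ⟨x, y, 1, e, by simp, by simp⟩⟩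
  | symm u v _ ih => exact ⟨ih.2, ih.1⟩
  | trans u v z _ _ ih1 ih2 => exact ⟨tr ih1.1 ih2.1, tr ih2.2 ih1.2⟩

/-- Splitting lemma: a word for `b * n`, with `n` right invertible, splits accordingly. -/
lemma split_word {π : List A → M} (h : IsSpecial π) (b n : M) (hn : ∃ r, n * r = 1)
    (z : List A) (hz : π z = b * n) :
    ∃ (x y : List A) (g : Mˣ), z = x ++ y ∧ π x = b * g ∧ n = g * π y := by
  obtain ⟨x, rfl⟩ := h.surj b
  obtain ⟨y, rfl⟩ := h.surj n
  exact (split_eqv h (h.eqv (x ++ y) z (by rw [hz, h.append]))).1 x y rfl hn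

open Classical in
/-- Value of the longest invertible suffix. -/
noncomputable def tailVal (π : List A → M) : List A → M
  | [] => 1
  | a :: l => if IsUnit (π (a :: l)) then π (a :: l) else tailVal π l

lemma tailVal_of_unit {π : List A → M} (h : IsSpecial π) (y : List A) (hy : IsUnit (π y)) :
    tailVal π y = π y := by
  cases y with
  | nil => simp [tailVal, h.nil]
  | cons a l => simp [tailVal, hy]

lemma tailVal_step {π : List A → M} (h : IsSpecial π) (s w t : List A) (hw : π w = 1) :
    tailVal π (s ++ w ++ t) = tailVal π (s ++ t) := by
  induction s with
  | nil =>
    simp only [List.nil_append]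
    by_cases ht : IsUnit (π t)
    · rw [tailVal_of_unit h t ht, tailVal_of_unit h, h.append, hw, one_mul]
      rw [h.append, hw, one_mul]; exact ht
    · have key : ∀ w'' : List A, (∃ l, l * π w'' = 1) → tailVal π (w'' ++ t) = tailVal π t := by
        intro w''
        induction w'' with
        | nil => simp
        | cons a v ih =>
          rintro ⟨l, hl⟩
          have hnu : ¬ IsUnit (π (a :: (v ++ t))) := by
            rintro ⟨g, hg⟩
            have e : π (a :: (v ++ t)) = π (a :: v) * π t := by
              rw [← h.append]; simp
            rw [e] at hg
            have hu : IsUnit (π (a :: v)) := by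
              refine isUnit_of_left_right hl (c := π t * (g⁻¹ : Mˣ)) ?_
              rw [← mul_assoc, ← hg]; simp
            obtain ⟨u, hu⟩ := hu
            apply ht
            refine ⟨u⁻¹ * g, ?_⟩
            rw [Units.val_mul, hg, ← hu]; simp
          rw [List.cons_append, tailVal, if_neg hnu]
          apply ih
          refine ⟨l * π [a], ?_⟩
          rw [mul_assoc, ← h.append]; exact hl
      exact key w ⟨1, by simp [hw]⟩
  | cons a s ih =>
    have e : π (a :: (s ++ w ++ t)) = π (a :: (s ++ t)) := by
      have e1 : a :: (s ++ w ++ t) = (a :: s) ++ w ++ t := by simp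
      have e2 : a :: (s ++ t) = (a :: s) ++ t := by simp
      rw [e1, e2]; simp only [h.append, hw, mul_one]
    simp only [List.cons_append, tailVal]
    rw [ih, e]

lemma tailVal_eqv {π : List A → M} (h : IsSpecial π) {u v : List A}
    (hs : EqvGen (DelStep π) u v) : tailVal π u = tailVal π v := by
  induction hs with
  | rel u v hs =>
    obtain ⟨s, w, t, hw, rfl, rfl⟩ := hs
    exact tailVal_step h s w t hw
  | refl u => rfl
  | symm u v _ ih => exact ih.symm
  | trans u v z _ _ ih1 ih2 => exact ih1.trans ih2

lemma tailVal_append_unit {π : List A → M} (h : IsSpecial π) (x y : List A)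
    (hy : IsUnit (π y)) : tailVal π (x ++ y) = tailVal π x * π y := by
  induction x with
  | nil => simp [tailVal, tailVal_of_unit h y hy]
  | cons a x ih =>
    have e : π (a :: (x ++ y)) = π (a :: x) * π y := by rw [← h.append]; simp
    obtain ⟨g, hg⟩ := hy
    simp only [List.cons_append, tailVal]
    rw [ih, e, ← hg]
    have hiff := Units.isUnit_mul_units (π (a :: x)) g
    by_cases hu : IsUnit (π (a :: x))
    · rw [if_pos hu, if_pos (hiff.2 hu)]
    · rw [if_neg hu, if_neg (fun hh => hu (hiff.1 hh))]

lemma tailVal_unit (π : List A → M) (x : List A) : IsUnit (tailVal π x) := by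
  induction x with
  | nil => simp [tailVal]
  | cons a x ih =>
    simp only [tailVal]
    split_ifs with hh
    · exact hh
    · exact ih

/-- The group of units acts freely on the right. -/
lemma unit_free {π : List A → M} (h : IsSpecial π) (m : M) (g : Mˣ) (hm : m * g = m) :
    g = 1 := by
  obtain ⟨x, rfl⟩ := h.surj m
  obtain ⟨y, hy⟩ := h.surj (g : M)
  have e : tailVal π (x ++ y) = tailVal π x :=
    tailVal_eqv h (h.eqv _ _ (by rw [h.append, hy, hm]))
  rw [tailVal_append_unit h x y (by rw [hy]; exact g.isUnit), hy] at e
  obtain ⟨t, ht⟩ := tailVal_unit π x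
  rw [← ht] at e
  have : t * g = t := Units.ext (by simpa using e)
  simpa using this

/-- A length function modulo units. -/
lemma exists_length {π : List A → M} (h : IsSpecial π) :
    ∃ f : M → ℕ, ∀ c p : M, (∃ r, p * r = 1) →
      f c ≤ f (c * p) ∧ (f (c * p) ≤ f c → IsUnit p) := by
  have hne : ∀ m : M, ∃ n : ℕ, ∃ (x : List A) (g : Mˣ), π x = m * g ∧ x.length = n := by
    intro m
    obtain ⟨x, hx⟩ := h.surj m
    exact ⟨_, x, 1, by simp [hx], rfl⟩
  classical
  refine ⟨fun m => Nat.find (hne m), ?_⟩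
  intro c p ⟨r, hr⟩
  obtain ⟨z, g, hz, hl⟩ := Nat.find_spec (hne (c * p))
  have hpg : ∃ r, (p * g) * r = 1 := ⟨(g⁻¹ : Mˣ) * r, by
    rw [mul_assoc, Units.mul_inv_cancel_left, hr]⟩
  obtain ⟨x, y, g', rfl, hx, hy⟩ := split_word h c (p * g) hpg z (by rw [hz, mul_assoc])
  have hle : Nat.find (hne c) ≤ x.length := Nat.find_min' _ ⟨x, g', hx, rfl⟩
  simp only [List.length_append] at hl
  refine ⟨by beta_reduce; omega, fun hle2 => ?_⟩
  beta_reduce at hle2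
  have : y = [] := List.eq_nil_of_length_eq_zero (by omega)
  subst this
  rw [h.nil, mul_one] at hy
  have : IsUnit (p * g) := by rw [hy]; exact g'.isUnit
  simpa using this

/-- Comparability. -/
lemma comparable {π : List A → M} (h : IsSpecial π) (b n b' n' : M)
    (hn : ∃ r, n * r = 1) (e : b * n = b' * n') (hn' : ∃ r, n' * r = 1) :
    (∃ p, b = b' * p ∧ n' = p * n) ∨ (∃ p, b' = b * p ∧ n = p * n') := by
  obtain ⟨x', rfl⟩ := h.surj b'
  obtain ⟨y', rfl⟩ := h.surj n'
  obtain ⟨x, y, g, e1, e2, e3⟩ := split_word h b n hn (x' ++ y') (by rw [h.append, e])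
  rcases List.append_eq_append_iff.1 e1 with ⟨p, rfl, rfl⟩ | ⟨p, rfl, rfl⟩
  · left
    refine ⟨π p * (g⁻¹ : Mˣ), ?_, ?_⟩
    · rw [← mul_assoc, ← h.append, e2]; simp
    · rw [e3, h.append]; simp [mul_assoc]
  · right
    refine ⟨g * π p, ?_, ?_⟩
    · rw [← mul_assoc, ← e2, h.append]
    · rw [e3, h.append, mul_assoc]

/-- Freeness of the action of right invertible elements. -/
lemma right_free {π : List A → M} (h : IsSpecial π) (m p : M) (hp : ∃ r, p * r = 1)
    (e : m * p = m) : p = 1 := by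
  obtain ⟨f, hf⟩ := exists_length h
  obtain ⟨g, rfl⟩ := (hf m p hp).2 (by rw [e])
  rw [unit_free h m g e]; rfl

lemma cancel {π : List A → M} (h : IsSpecial π) (m n n' : M)
    (hn : ∃ r, n * r = 1) (hn' : ∃ r, n' * r = 1) (e : m * n = m * n') : n = n' := by
  rcases comparable h m n m n' hn e hn' with ⟨p, h1, h2⟩ | ⟨p, h1, h2⟩
  · obtain ⟨r, hr⟩ := hn'
    have := right_free h m p ⟨n * r, by rw [← mul_assoc, ← h2, hr]⟩ h1.symm
    rw [h2, this, one_mul]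
  · obtain ⟨r, hr⟩ := hn
    have := right_free h m p ⟨n' * r, by rw [← mul_assoc, ← h2, hr]⟩ h1.symm
    rw [h2, this, one_mul]

/-- The opposite monoid is special as well. -/
lemma IsSpecial.op {π : List A → M} (h : IsSpecial π) :
    IsSpecial (fun l => MulOpposite.op (π l.reverse)) where
  nil := by simp [h.nil]
  append x y := by simp [h.append]
  surj m := by
    obtain ⟨x, hx⟩ := h.surj m.unop
    exact ⟨x.reverse, by simp [hx]⟩
  eqv x y e := by
    have key : ∀ u v, EqvGen (DelStep π) u v →
        EqvGen (DelStep (fun l => MulOpposite.op (π l.reverse))) u.reverse v.reverse := by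
      intro u v huv
      induction huv with
      | rel u v hs =>
        obtain ⟨s, w, t, hw, rfl, rfl⟩ := hs
        exact EqvGen.rel _ _ ⟨t.reverse, w.reverse, s.reverse, by simp [hw], by simp, by simp⟩
      | refl u => exact EqvGen.refl _
      | symm u v _ ih => exact ih.symm
      | trans u v z _ _ ih1 ih2 => exact ih1.trans _ _ _ ih2
    have := key _ _ (h.eqv _ _ (MulOpposite.op_injective e))
    simpa using this

lemma comparable_left {π : List A → M} (h : IsSpecial π) (b n b' n' : M)
    (hn : ∃ r, r * n = 1) (e : n * b = n' * b') (hn' : ∃ r, r * n' = 1) :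
    (∃ p, b = p * b' ∧ n' = n * p) ∨ (∃ p, b' = p * b ∧ n = n' * p) := by
  obtain ⟨r, hr⟩ := hn
  obtain ⟨r', hr'⟩ := hn'
  rcases comparable h.op (.op b) (.op n) (.op b') (.op n')
    ⟨.op r, by rw [← MulOpposite.op_mul, hr]; rfl⟩
    (by rw [← MulOpposite.op_mul, e]; rfl)
    ⟨.op r', by rw [← MulOpposite.op_mul, hr']; rfl⟩ with ⟨p, h1, h2⟩ | ⟨p, h1, h2⟩
  · exact Or.inl ⟨p.unop, congrArg MulOpposite.unop h1, congrArg MulOpposite.unop h2⟩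
  · exact Or.inr ⟨p.unop, congrArg MulOpposite.unop h1, congrArg MulOpposite.unop h2⟩

lemma cancel_left {π : List A → M} (h : IsSpecial π) (m n n' : M)
    (hn : ∃ r, r * n = 1) (hn' : ∃ r, r * n' = 1) (e : n * m = n' * m) : n = n' := by
  obtain ⟨r, hr⟩ := hn
  obtain ⟨r', hr'⟩ := hn'
  exact MulOpposite.op_injective (cancel h.op (.op m) (.op n) (.op n')
    ⟨.op r, by rw [← MulOpposite.op_mul, hr]; rfl⟩
    ⟨.op r', by rw [← MulOpposite.op_mul, hr']; rfl⟩
    (by rw [← MulOpposite.op_mul, e]; rfl))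

lemma exists_length_left {π : List A → M} (h : IsSpecial π) :
    ∃ f : M → ℕ, ∀ c p : M, (∃ r, r * p = 1) → f c ≤ f (p * c) := by
  obtain ⟨f, hf⟩ := exists_length h.op
  refine ⟨fun m => f (.op m), ?_⟩
  rintro c p ⟨r, hr⟩
  exact (hf (.op c) (.op p) ⟨.op r, by rw [← MulOpposite.op_mul, hr]; rfl⟩).1

/-- Orbits of the group of units on `M × M`. -/
def unitSetoid (M : Type*) [Monoid M] : Setoid (M × M) where
  r b b' := ∃ t : Mˣ, b' = (b.1 * t, (t⁻¹ : Mˣ) * b.2)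
  iseqv :=
    { refl := fun b => ⟨1, by simp⟩
      symm := by
        rintro b b' ⟨t, rfl⟩
        exact ⟨t⁻¹, by simp⟩
      trans := by
        rintro b b' b'' ⟨t, rfl⟩ ⟨t', rfl⟩
        exact ⟨t * t', by simp [mul_assoc]⟩ }

/-- Pairs that cannot be reduced any further. -/
def Prim (b : M × M) : Prop :=
  ∀ c1 c2 p q : M, p * q = 1 → b = (c1 * p, q * c2) → IsUnit p

lemma Prim.unit {b : M × M} (hb : Prim b) (t : Mˣ) :
    Prim (b.1 * t, (t⁻¹ : Mˣ) * b.2) := by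
  intro c1 c2 p q hpq e
  have e1 : b.1 * t = c1 * p := congrArg Prod.fst e
  have e2 : (t⁻¹ : Mˣ) * b.2 = q * c2 := congrArg Prod.snd e
  have := hb c1 c2 (p * (t⁻¹ : Mˣ)) (t * q)
    (by rw [mul_assoc, Units.inv_mul_cancel_left, hpq])
    (by
      refine Prod.ext ?_ ?_
      · show b.1 = c1 * (p * (t⁻¹ : Mˣ))
        rw [← mul_assoc, ← e1]; simp
      · show b.2 = t * q * c2
        rw [mul_assoc, ← e2]; simp)
  simpa using this

lemma exists_prim {π : List A → M} (h : IsSpecial π) (m : M × M) :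
    ∃ (b : M × M) (n1 n2 : M), Prim b ∧ n1 * n2 = 1 ∧ m = (b.1 * n1, n2 * b.2) := by
  obtain ⟨f, hf⟩ := exists_length h
  obtain ⟨f', hf'⟩ := exists_length_left h
  have hne : ∃ k, ∃ (b : M × M) (n1 n2 : M), n1 * n2 = 1 ∧ m = (b.1 * n1, n2 * b.2) ∧
      f b.1 + f' b.2 = k := ⟨_, m, 1, 1, by simp, by simp, rfl⟩
  classical
  obtain ⟨b, n1, n2, hn, hm, hk⟩ := Nat.find_spec hne
  refine ⟨b, n1, n2, ?_, hn, hm⟩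
  rintro c1 c2 p q hpq rfl
  have hmin := Nat.find_min' hne ⟨(c1, c2), p * n1, n2 * q, by
    rw [mul_assoc, ← mul_assoc n1, hn, one_mul, hpq], by
    rw [hm]; simp [mul_assoc], rfl⟩
  have h1 := hf c1 p ⟨q, hpq⟩
  have h2 := hf' c2 q ⟨p, hpq⟩
  simp only at hmin hk
  exact h1.2 (by omega)

lemma prim_unique {π : List A → M} (h : IsSpecial π) {b b' : M × M} (hb : Prim b)
    (hb' : Prim b') {n1 n2 n1' n2' : M} (hn : n1 * n2 = 1) (hn' : n1' * n2' = 1)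
    (e1 : b.1 * n1 = b'.1 * n1') (e2 : n2 * b.2 = n2' * b'.2) :
    (unitSetoid M).r b b' := by
  -- comparable decompositions of the same kind
  have same : ∀ {b b' : M × M} {n1 n2 n1' n2' p q : M}, Prim b → n1 * n2 = 1 → n1' * n2' = 1 →
      b.1 = b'.1 * p → n1' = p * n1 → b.2 = q * b'.2 → n2' = n2 * q →
      (unitSetoid M).r b' b := by
    intro b b' n1 n2 n1' n2' p q hb hn hn' h1 h2 h3 h4
    have hpq : p * q = 1 := by
      rw [h2, h4, mul_assoc, ← mul_assoc n1, hn, one_mul] at hn'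
      exact hn'
    obtain ⟨t, rfl⟩ := hb b'.1 b'.2 p q hpq (Prod.ext h1 h3)
    refine ⟨t, Prod.ext h1 ?_⟩
    have hq : q = ((t⁻¹ : Mˣ) : M) := by
      rw [← mul_one ((t⁻¹ : Mˣ) : M), ← hpq, Units.inv_mul_cancel_left]
    rw [h3, hq]
  have cross : ∀ {b b' : M × M} {n1 n2 n1' n2' p q : M}, n1 * n2 = 1 → n1' * n2' = 1 →
      b.1 = b'.1 * p → n1' = p * n1 → b'.2 = q * b.2 → n2 = n2' * q →
      (unitSetoid M).r b' b := by
    intro b b' n1 n2 n1' n2' p q hn hn' h1 h2 h3 h4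
    have hp : p * (n1 * n2') = 1 := by rw [← mul_assoc, ← h2, hn']
    have hq : (n1 * n2') * q = 1 := by rw [mul_assoc, ← h4, hn]
    have hpq : p = q := left_inv_eq_right_inv hp hq
    subst hpq
    refine ⟨⟨p, n1 * n2', hp, hq⟩, Prod.ext h1 ?_⟩
    show b.2 = (n1 * n2') * b'.2
    rw [h3, ← mul_assoc, hq, one_mul]
  rcases comparable h b.1 n1 b'.1 n1' ⟨n2, hn⟩ e1 ⟨n2', hn'⟩ with ⟨p, h1, h2⟩ | ⟨p, h1, h2⟩ <;>
  rcases comparable_left h b.2 n2 b'.2 n2' ⟨n1, hn⟩ e2 ⟨n1', hn'⟩ with ⟨q, h3, h4⟩ | ⟨q, h3, h4⟩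
  · exact (unitSetoid M).symm (same hb hn hn' h1 h2 h3 h4)
  · exact (unitSetoid M).symm (cross hn hn' h1 h2 h3 h4)
  · exact cross hn' hn h1 h2 h3 h4
  · exact same hb' hn' hn h1 h2 h3 h4

lemma main {π : List A → M} (h : IsSpecial π) :
    ∃ B : Set (M × M), ∀ m : M × M, ∃! x : (M × M) × (M × Mᵐᵒᵖ),
      x.1 ∈ B ∧ x.2.1 * x.2.2.unop = 1 ∧ m = (x.1.1 * x.2.1, x.2.2.unop * x.1.2) := by
  refine ⟨{b | Prim b ∧ (Quotient.mk (unitSetoid M) b).out = b}, fun m => ?_⟩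
  obtain ⟨b, n1, n2, hb, hn, hm⟩ := exists_prim h m
  have hrel : (unitSetoid M).r b (Quotient.mk (unitSetoid M) b).out :=
    (unitSetoid M).symm (Quotient.mk_out (s := unitSetoid M) b)
  obtain ⟨t, ht⟩ := hrel
  have hp : Prim (Quotient.mk (unitSetoid M) b).out := by rw [ht]; exact hb.unit t
  refine ⟨((Quotient.mk (unitSetoid M) b).out,
    ((t⁻¹ : Mˣ) * n1, MulOpposite.op (n2 * t))), ⟨⟨hp, ?_⟩, ?_, ?_⟩, ?_⟩
  · simp only [Quotient.out_eq]
  · simp only [MulOpposite.unop_op]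
    rw [mul_assoc, ← mul_assoc n1, hn]; simp
  · rw [ht, hm]; simp [mul_assoc]
  · have huniq : ∀ x y : (M × M) × (M × Mᵐᵒᵖ),
        (x.1 ∈ {b | Prim b ∧ (Quotient.mk (unitSetoid M) b).out = b} ∧
          x.2.1 * x.2.2.unop = 1 ∧ m = (x.1.1 * x.2.1, x.2.2.unop * x.1.2)) →
        (y.1 ∈ {b | Prim b ∧ (Quotient.mk (unitSetoid M) b).out = b} ∧
          y.2.1 * y.2.2.unop = 1 ∧ m = (y.1.1 * y.2.1, y.2.2.unop * y.1.2)) → x = y := by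
      rintro ⟨b, n1, n2⟩ ⟨b', n1', n2'⟩ ⟨⟨hb, ho⟩, hn, hm⟩ ⟨⟨hb', ho'⟩, hn', hm'⟩
      simp only at hb ho hn hm hb' ho' hn' hm'
      rw [hm] at hm'
      obtain ⟨e1, e2⟩ := Prod.mk.inj hm'
      have hr := prim_unique h hb hb' hn hn' e1 e2
      have hbb : b = b' := by
        rw [← ho, ← ho', Quotient.sound (s := unitSetoid M) hr]
      subst hbb
      have f1 := cancel h _ _ _ ⟨_, hn⟩ ⟨_, hn'⟩ e1
      have f2 := MulOpposite.unop_injective (cancel_left h _ _ _ ⟨_, hn⟩ ⟨_, hn'⟩ e2)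
      rw [f1, f2]
    intro y hy
    refine huniq _ _ hy ⟨⟨hp, ?_⟩, ?_, ?_⟩
    · simp only [Quotient.out_eq]
    · simp only [MulOpposite.unop_op]
      rw [mul_assoc, ← mul_assoc n1, hn]; simp
    · rw [ht, hm]; simp [mul_assoc]

lemma isSpecial_presented (rel : FreeMonoid A → FreeMonoid A → Prop)
    (hrel : ∀ x y, rel x y → y = 1) :
    IsSpecial (fun l : List A => PresentedMonoid.mk rel (FreeMonoid.ofList l)) where
  nil := map_one _
  append x y := by
    rw [FreeMonoid.ofList_append, map_mul]
  surj m := by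
    obtain ⟨x, rfl⟩ := Con.mk'_surjective (c := conGen rel) m
    exact ⟨x.toList, rfl⟩
  eqv x y e := by
    set π := (fun l : List A => PresentedMonoid.mk rel (FreeMonoid.ofList l)) with hπ
    have pre : ∀ (z u v : List A), EqvGen (DelStep π) u v →
        EqvGen (DelStep π) (z ++ u) (z ++ v) := by
      intro z u v huv
      induction huv with
      | rel u v hs =>
        obtain ⟨s, w, t, hw, rfl, rfl⟩ := hs
        exact EqvGen.rel _ _ ⟨z ++ s, w, t, hw, by simp, by simp⟩
      | refl u => exact EqvGen.refl _
      | symm u v _ ih => exact ih.symm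
      | trans u v z _ _ ih1 ih2 => exact ih1.trans _ _ _ ih2
    have post : ∀ (z u v : List A), EqvGen (DelStep π) u v →
        EqvGen (DelStep π) (u ++ z) (v ++ z) := by
      intro z u v huv
      induction huv with
      | rel u v hs =>
        obtain ⟨s, w, t, hw, rfl, rfl⟩ := hs
        exact EqvGen.rel _ _ ⟨s, w, t ++ z, hw, by simp, by simp⟩
      | refl u => exact EqvGen.refl _
      | symm u v _ ih => exact ih.symm
      | trans u v z _ _ ih1 ih2 => exact ih1.trans _ _ _ ih2
    have key : ∀ u v : FreeMonoid A, ConGen.Rel rel u v →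
        EqvGen (DelStep π) u.toList v.toList := by
      intro u v huv
      induction huv with
      | of u v huv =>
        have hv := hrel u v huv
        subst hv
        refine EqvGen.rel _ _ ⟨[], u.toList, [], ?_, by simp, by simp⟩
        exact (Con.eq _).2 (ConGen.Rel.of _ _ huv)
      | refl u => exact EqvGen.refl _
      | symm _ ih => exact ih.symm
      | trans _ _ ih1 ih2 => exact ih1.trans _ _ _ ih2
      | mul _ _ ih1 ih2 =>
        rw [FreeMonoid.toList_mul, FreeMonoid.toList_mul]
        exact (post _ _ _ ih1).trans _ _ _ (pre _ _ _ ih2)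
    exact key _ _ ((Con.eq _).1 e)

end SpecialMonoidFree

/-- Let `M = ⟨A ∣ w₁ = 1, …, w_k = 1⟩` be a finitely presented special monoid and `N` the
submonoid of `M × Mᵐᵒᵖ` consisting of the pairs `(u, v)` with `u * v = 1` in `M`.  Then
`M × M` is a free right `N`-set under `(m₁, m₂)·(n₁, n₂) = (m₁ n₁, n₂ m₂)`: there is a
subset `B ⊆ M × M` such that every element of `M × M` is uniquely of the form
`(b₁ n₁, n₂ b₂)` with `(b₁, b₂) ∈ B` and `(n₁, n₂) ∈ N`. -/
theorem special_monoid_MxM_free_N_set {A : Type*} [Fintype A] {k : ℕ}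
    (w : Fin k → FreeMonoid A)
    (rel : FreeMonoid A → FreeMonoid A → Prop)
    (hrel : ∀ x y, rel x y ↔ ∃ i : Fin k, x = w i ∧ y = 1)
    (N : Submonoid (PresentedMonoid rel × (PresentedMonoid rel)ᵐᵒᵖ))
    (hN : ∀ p : PresentedMonoid rel × (PresentedMonoid rel)ᵐᵒᵖ,
      p ∈ N ↔ p.1 * p.2.unop = 1) :
    ∃ B : Set (PresentedMonoid rel × PresentedMonoid rel),
      ∀ m : PresentedMonoid rel × PresentedMonoid rel,
        ∃! x : (PresentedMonoid rel × PresentedMonoid rel) ×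
            (PresentedMonoid rel × (PresentedMonoid rel)ᵐᵒᵖ),
          x.1 ∈ B ∧ x.2 ∈ N ∧ m = (x.1.1 * x.2.1, x.2.2.unop * x.1.2) := by

  obtain ⟨B, hB⟩ := SpecialMonoidFree.main
    (SpecialMonoidFree.isSpecial_presented rel (fun x y h => ((hrel x y).1 h).choose_spec.2))
  refine ⟨B, fun m => ?_⟩
  simp only [hN]
  exact hB m
end

section
/- Let M be a finitely presented special monoid ⟨A ∣ w₁ = 1, …, w_k = 1⟩ with canonical projection π : FreeMonoid A →* M, and let N be the submonoid of M × Mᵒᵖ consisting of the pairs (u, v) with u * v = 1 in M. Let ≈ denote the weak N-orbit equivalence on M × M, i.e. the smallest equivalence relation with (m₁, m₂) ≈ (m₁ n₁, n₂ m₂) for all (m₁, m₂) ∈ M × M and (n₁, n₂) ∈ N. Let E = {(u, a, v) ∈ M × A × M : (u, π(a)·v) ≈ (u·π(a), v)} (the edges of the two-sided Cayley graph of M joining two vertices in the same weak N-orbit). Then: (i) E is closed under the action (m₁, m₂)·(u, a, v) = (m₁ u, a, v m₂) of M × Mᵒᵖ; and (ii) E is a finitely generated free left M × Mᵒᵖ-set: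 there is a finite subset C ⊆ E such that every element of E can be written in exactly one way as (m₁ c₁, a, c₂ m₂) with (c₁, a, c₂) ∈ C and (m₁, m₂) ∈ M × M. -/
namespace SpecialMonoidAux

variable {A M : Type*} [Monoid M]

/-- Evaluation of a word. -/
def ev (f : A → M) (l : List A) : M := (l.map f).prod

@[simp] theorem ev_nil (f : A → M) : ev f [] = 1 := rfl
@[simp] theorem ev_cons (f : A → M) (a : A) (l : List A) : ev f (a :: l) = f a * ev f l := by
  simp [ev]
@[simp] theorem ev_append (f : A → M) (l l' : List A) : ev f (l ++ l') = ev f l * ev f l' := by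
  simp [ev]

/-- A right and left invertible element is a unit. -/
theorem isUnit_of_lr {a b c : M} (h : a * b = 1) (h' : c * a = 1) : IsUnit a := by
  have hbc : c = b := by
    calc c = c * (a * b) := by rw [h, mul_one]
      _ = b := by rw [← mul_assoc, h', one_mul]
  exact ⟨⟨a, b, h, by rw [← hbc, h']⟩, rfl⟩

theorem rinv_of_unit_mul {a b : M} (h : IsUnit (a * b)) : ∃ c, a * c = 1 := by
  obtain ⟨c, hc⟩ := h.exists_right_inv
  exact ⟨b * c, by rw [← mul_assoc, hc]⟩

theorem linv_of_unit_mul {a b : M} (h : IsUnit (a * b)) : ∃ c, c * b = 1 := by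
  obtain ⟨c, hc⟩ := h.exists_left_inv
  exact ⟨c * a, by rw [mul_assoc, hc]⟩

theorem isUnit_mid {a b c : M} (h : IsUnit (a * b)) (h' : IsUnit (b * c)) : IsUnit b := by
  obtain ⟨x, hx⟩ := rinv_of_unit_mul h'
  obtain ⟨y, hy⟩ := linv_of_unit_mul h
  exact isUnit_of_lr hx hy

theorem isUnit_right {a b : M} (ha : IsUnit a) (h : IsUnit (a * b)) : IsUnit b := by
  obtain ⟨u, rfl⟩ := ha
  simpa using h

theorem isUnit_left {a b : M} (hb : IsUnit b) (h : IsUnit (a * b)) : IsUnit a := by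
  obtain ⟨u, rfl⟩ := hb
  simpa using h

/-- Irreducible words. -/
def Irr (f : A → M) (nf : M → List A) (p : List A) : Prop :=
  ∀ s q t, p = s ++ q ++ t → IsUnit (ev f q) → q = nf (ev f q)

theorem lex_append_right (r : A → A → Prop) : ∀ {s₁ s₂ : List A}, s₁.length = s₂.length →
    List.Lex r s₁ s₂ → ∀ t, List.Lex r (s₁ ++ t) (s₂ ++ t)
  | [], [], _, h, _ => by cases h
  | [], _ :: _, hl, _, _ => by simp at hl
  | _ :: _, [], hl, _, _ => by simp at hl
  | a :: s₁, b :: s₂, hl, h, t => by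
    cases h with
    | cons h => exact .cons (lex_append_right r (by simpa using hl) h t)
    | rel h => exact .rel h

theorem shortlex_append_right (r : A → A → Prop) {s₁ s₂ : List A}
    (h : List.Shortlex r s₁ s₂) (t : List A) : List.Shortlex r (s₁ ++ t) (s₂ ++ t) := by
  rw [List.shortlex_def] at h ⊢
  rcases h with h | ⟨h, h'⟩
  · left; simpa using h
  · right; exact ⟨by simpa using h, lex_append_right r h h' t⟩

/-- Existence of shortlex normal forms. -/
theorem exists_nf (f : A → M) (hs : Function.Surjective (ev f)) :
    ∃ nf : M → List A, (∀ m, ev f (nf m) = m) ∧ (∀ m, Irr f nf (nf m)) ∧ nf 1 = [] ∧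
      ∀ p, (nf (ev f p)).length ≤ p.length := by
  classical
  have wf : WellFounded (List.Shortlex (WellOrderingRel : A → A → Prop)) :=
    List.Shortlex.wf WellOrderingRel.isWellOrder.wf
  choose nf h1 h2 using fun m : M => show ∃ l, ev f l = m ∧ ∀ p, ev f p = m →
      ¬ List.Shortlex (WellOrderingRel : A → A → Prop) p l from by
    obtain ⟨l, hl, h⟩ := wf.has_min {l | ev f l = m} (hs m)
    exact ⟨l, hl, h⟩
  refine ⟨nf, h1, ?_, ?_, ?_⟩
  · intro m s q t hq _
    by_contra hne
    have h3 := h2 (ev f q) q rfl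
    have h4 : List.Shortlex (WellOrderingRel : A → A → Prop) (nf (ev f q)) q := by
      by_contra h4
      exact hne (Std.Trichotomous.trichotomous (r := List.Shortlex WellOrderingRel) _ _ h3 h4)
    refine h2 m (s ++ nf (ev f q) ++ t) ?_ ?_
    · rw [← h1 m, hq]; simp [h1]
    · rw [hq]
      exact shortlex_append_right _ (h4.append_left s) t
  · have h3 := h2 1 [] rfl
    rcases List.shortlex_nil_or_eq_nil (r := WellOrderingRel) (nf 1) with h | h
    · exact absurd h h3
    · exact h
  · intro p
    by_contra h
    exact h2 _ p rfl (List.Shortlex.of_length_lt (not_le.mp h))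

theorem Irr.sub {f : A → M} {nf : M → List A} {s q t : List A} (h : Irr f nf (s ++ q ++ t)) :
    Irr f nf q := by
  intro s' q' t' e hu
  exact h (s ++ s') q' (t' ++ t) (by simp [e]) hu

/-- The rewriting step. -/
def Step (f : A → M) (nf : M → List A) (P Q : List A) : Prop :=
  ∃ s p t, IsUnit (ev f p) ∧ P = s ++ p ++ t ∧ Q = s ++ nf (ev f p) ++ t

theorem diamond_aux {f : A → M} {nf : M → List A} (h1 : ∀ m, ev f (nf m) = m)
    {s₁ p₁ t₁ s₂ p₂ t₂ : List A} (hu₁ : IsUnit (ev f p₁)) (hu₂ : IsUnit (ev f p₂))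
    {s' : List A} (hs : s₂ = s₁ ++ s') (h : p₁ ++ t₁ = s' ++ (p₂ ++ t₂)) :
    ∃ d, Relation.ReflGen (Step f nf) (s₁ ++ nf (ev f p₁) ++ t₁) d ∧
      Relation.ReflGen (Step f nf) (s₂ ++ nf (ev f p₂) ++ t₂) d := by
  subst hs
  rcases List.append_eq_append_iff.mp h with ⟨k, rfl, rfl⟩ | ⟨c, rfl, h'⟩
  · refine ⟨s₁ ++ nf (ev f p₁) ++ k ++ nf (ev f p₂) ++ t₂, .single ?_, .single ?_⟩
    · exact ⟨s₁ ++ nf (ev f p₁) ++ k, p₂, t₂, hu₂, by simp, by simp⟩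
    · exact ⟨s₁, p₁, k ++ nf (ev f p₂) ++ t₂, hu₁, by simp, by simp⟩
  · rcases List.append_eq_append_iff.mp h' with ⟨t', rfl, rfl⟩ | ⟨t', rfl, rfl⟩
    · refine ⟨s₁ ++ nf (ev f (s' ++ (p₂ ++ t'))) ++ t₁, .refl, .single ?_⟩
      refine ⟨s₁, s' ++ (nf (ev f p₂) ++ t'), t₁, ?_, by simp, by simp [h1]⟩
      simpa [h1] using hu₁
    · have hc : IsUnit (ev f c) := by
        rw [ev_append] at hu₁ hu₂
        exact isUnit_mid hu₁ hu₂
      have ht : IsUnit (ev f t') := by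
        rw [ev_append] at hu₂
        exact isUnit_right hc hu₂
      have hs' : IsUnit (ev f s') := by
        rw [ev_append] at hu₁
        exact isUnit_left hc hu₁
      refine ⟨s₁ ++ nf (ev f (s' ++ c ++ t')) ++ t₂, .single ?_, .single ?_⟩
      · refine ⟨s₁, nf (ev f (s' ++ c)) ++ t', t₂, ?_, by simp, by simp [h1, mul_assoc]⟩
        rw [ev_append, h1]
        exact hu₁.mul ht
      · refine ⟨s₁, s' ++ nf (ev f (c ++ t')), t₂, ?_, by simp, by simp [h1, mul_assoc]⟩
        rw [ev_append, h1]
        exact hs'.mul hu₂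

theorem diamond {f : A → M} {nf : M → List A} (h1 : ∀ m, ev f (nf m) = m) (a b c : List A)
    (hb : Step f nf a b) (hc : Step f nf a c) :
    ∃ d, Relation.ReflGen (Step f nf) b d ∧ Relation.ReflGen (Step f nf) c d := by
  obtain ⟨s₁, p₁, t₁, hu₁, rfl, rfl⟩ := hb
  obtain ⟨s₂, p₂, t₂, hu₂, h, rfl⟩ := hc
  rw [List.append_assoc, List.append_assoc] at h
  rcases List.append_eq_append_iff.mp h with ⟨s', hs, h'⟩ | ⟨s', hs, h'⟩
  · exact diamond_aux h1 hu₁ hu₂ hs h'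
  · obtain ⟨d, hd, hd'⟩ := diamond_aux h1 hu₂ hu₁ hs h'
    exact ⟨d, hd', hd⟩

/-- Deleting a relator. -/
def WStep (W : Set (List A)) (P Q : List A) : Prop :=
  ∃ s w t, w ∈ W ∧ P = s ++ w ++ t ∧ Q = s ++ t

theorem irr_refl {f : A → M} {nf : M → List A} {p q : List A} (hp : Irr f nf p)
    (h : Relation.ReflTransGen (Step f nf) p q) : p = q := by
  induction h with
  | refl => rfl
  | tail _ hs ih =>
    subst ih
    obtain ⟨s, q, t, hu, rfl, rfl⟩ := hs
    rw [← hp s q t rfl hu]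

/-- Irreducible words are unique representatives. -/
theorem irr_unique {f : A → M} {nf : M → List A} (h1 : ∀ m, ev f (nf m) = m) (h0 : nf 1 = [])
    {W : Set (List A)} (hW1 : ∀ w ∈ W, ev f w = 1)
    (hW : ∀ p q, ev f p = ev f q → Relation.EqvGen (WStep W) p q)
    {p q : List A} (hp : Irr f nf p) (hq : Irr f nf q) (h : ev f p = ev f q) : p = q := by
  have key : ∀ x y, Relation.EqvGen (WStep W) x y →
      Relation.Join (Relation.ReflTransGen (Step f nf)) x y := by
    have heq : Equivalence (Relation.Join (Relation.ReflTransGen (Step f nf))) :=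
      Relation.equivalence_join_reflTransGen fun a b c hb hc => by
        obtain ⟨d, hd, hd'⟩ := diamond h1 a b c hb hc
        exact ⟨d, hd, hd'.to_reflTransGen⟩
    intro x y hxy
    induction hxy with
    | rel x y hxy =>
      obtain ⟨s, w, t, hw, rfl, rfl⟩ := hxy
      refine ⟨s ++ t, .single ⟨s, w, t, ?_, rfl, ?_⟩, .refl⟩
      · rw [hW1 w hw]; exact isUnit_one
      · rw [hW1 w hw, h0]; simp
    | refl x => exact heq.refl x
    | symm x y _ ih => exact heq.symm ih
    | trans x y z _ _ ih ih' => exact heq.trans ih ih'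
  obtain ⟨d, hd, hd'⟩ := key p q (hW p q h)
  rw [irr_refl hp hd, irr_refl hq hd']

theorem irr_append_right {f : A → M} {nf : M → List A} {s x : List A} (hs : Irr f nf s)
    (hx : Irr f nf x) (hr : ∃ c, ev f x * c = 1)
    (hno : ∀ t x', x = t ++ x' → IsUnit (ev f t) → t = []) : Irr f nf (s ++ x) := by
  intro l q r h hu
  rw [List.append_assoc] at h
  rcases List.append_eq_append_iff.mp h with ⟨k, rfl, h'⟩ | ⟨c, rfl, h'⟩
  · exact hx k q r (by simpa using h') hu
  · rcases List.append_eq_append_iff.mp h'.symm with ⟨e, rfl, rfl⟩ | ⟨e, rfl, rfl⟩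
    · have hel : ∃ z, z * ev f e = 1 := by
        rw [ev_append] at hu
        exact linv_of_unit_mul hu
      have her : ∃ z, ev f e * z = 1 := by
        obtain ⟨z, hz⟩ := hr
        exact ⟨ev f r * z, by rw [← mul_assoc, ← ev_append, hz]⟩
      obtain ⟨z, hz⟩ := hel
      obtain ⟨z', hz'⟩ := her
      have he := hno e r rfl (isUnit_of_lr hz' hz)
      subst he
      exact hs l (c ++ []) [] (by simp) hu
    · exact hs l q e (by simp) hu

theorem irr_append_left {f : A → M} {nf : M → List A} {s x : List A} (hs : Irr f nf s)
    (hx : Irr f nf x) (hr : ∃ c, c * ev f x = 1)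
    (hno : ∀ t x', x = x' ++ t → IsUnit (ev f t) → t = []) : Irr f nf (x ++ s) := by
  intro l q r h hu
  rw [List.append_assoc] at h
  rcases List.append_eq_append_iff.mp h with ⟨k, rfl, h'⟩ | ⟨c, rfl, h'⟩
  · exact hs k q r (by simpa using h') hu
  · rcases List.append_eq_append_iff.mp h'.symm with ⟨e, rfl, rfl⟩ | ⟨e, rfl, rfl⟩
    · have hel : ∃ z, ev f c * z = 1 := by
        rw [ev_append] at hu
        exact rinv_of_unit_mul hu
      have her : ∃ z, z * ev f c = 1 := by
        obtain ⟨z, hz⟩ := hr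
        exact ⟨z * ev f l, by rw [mul_assoc, ← ev_append, hz]⟩
      obtain ⟨z, hz⟩ := her
      obtain ⟨z', hz'⟩ := hel
      have he := hno c l rfl (isUnit_of_lr hz' hz)
      subst he
      exact hs [] ([] ++ e) r (by simp) hu
    · exact hx l q e (by simp) hu

/-- Strip the longest unit prefix. -/
theorem strip_prefix (f : A → M) : ∀ (n : ℕ) (x : List A), x.length = n →
    ∃ t x', x = t ++ x' ∧ IsUnit (ev f t) ∧
      ∀ u x'', x' = u ++ x'' → IsUnit (ev f u) → u = [] := by
  intro n
  induction n using Nat.strong_induction_on with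
  | _ n ih =>
    intro x hx
    by_cases h : ∀ u x'', x = u ++ x'' → IsUnit (ev f u) → u = []
    · exact ⟨[], x, rfl, by simp, h⟩
    · push Not at h
      obtain ⟨u, x'', rfl, hu, hne⟩ := h
      have hlt : x''.length < n := by
        have := List.length_pos_iff.mpr hne
        simp at hx; omega
      obtain ⟨t, x', rfl, ht, hno⟩ := ih _ hlt x'' rfl
      exact ⟨u ++ t, x', by simp, by rw [ev_append]; exact hu.mul ht, hno⟩

theorem strip_suffix (f : A → M) : ∀ (n : ℕ) (x : List A), x.length = n →
    ∃ t x', x = x' ++ t ∧ IsUnit (ev f t) ∧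
      ∀ u x'', x' = x'' ++ u → IsUnit (ev f u) → u = [] := by
  intro n
  induction n using Nat.strong_induction_on with
  | _ n ih =>
    intro x hx
    by_cases h : ∀ u x'', x = x'' ++ u → IsUnit (ev f u) → u = []
    · exact ⟨[], x, by simp, by simp, h⟩
    · push Not at h
      obtain ⟨u, x'', rfl, hu, hne⟩ := h
      have hlt : x''.length < n := by
        have := List.length_pos_iff.mpr hne
        simp at hx; omega
      obtain ⟨t, x', rfl, ht, hno⟩ := ih _ hlt x'' rfl
      exact ⟨t ++ u, x', by simp, by rw [ev_append]; exact ht.mul hu, hno⟩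

/-- Minimal unit words around a letter. -/
def Mini (f : A → M) (x : List A) (a : A) (y : List A) : Prop :=
  IsUnit (ev f (x ++ a :: y)) ∧ ∀ x' x'' y' y'', x = x' ++ x'' → y = y'' ++ y' →
    IsUnit (ev f (x'' ++ a :: y'')) → x' = [] ∧ y' = []

theorem exists_mini (f : A → M) (a : A) : ∀ (n : ℕ) (x y : List A), x.length + y.length = n →
    IsUnit (ev f (x ++ a :: y)) →
    ∃ x' x₀ y' y₀, x = x' ++ x₀ ∧ y = y₀ ++ y' ∧ Mini f x₀ a y₀ := by
  intro n
  induction n using Nat.strong_induction_on with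
  | _ n ih =>
    intro x y hn hu
    by_cases h : Mini f x a y
    · exact ⟨[], x, [], y, rfl, by simp, h⟩
    · simp only [Mini, not_and, not_forall] at h
      obtain ⟨x', x'', y', y'', rfl, rfl, hu', hne⟩ := h hu
      have hlt : x''.length + y''.length < n := by
        have : 0 < x'.length ∨ 0 < y'.length := by
          by_contra hc
          push Not at hc
          simp at hc
          exact hne hc.1 hc.2
        simp at hn; omega
      obtain ⟨z', z₀, v', v₀, rfl, rfl, hm⟩ := ih _ hlt x'' y'' rfl hu'
      exact ⟨x' ++ z', z₀, v' ++ y', v₀, by simp, by simp, hm⟩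

theorem Mini.noprefix {f : A → M} {x : List A} {a : A} {y : List A} (h : Mini f x a y) :
    ∀ t x', x = t ++ x' → IsUnit (ev f t) → t = [] := by
  rintro t x' rfl ht
  refine (h.2 t x' [] y rfl (by simp) ?_).1
  have := h.1
  rw [List.append_assoc, ev_append] at this
  exact isUnit_right ht this

theorem Mini.nosuffix {f : A → M} {x : List A} {a : A} {y : List A} (h : Mini f x a y) :
    ∀ t y', y = y' ++ t → IsUnit (ev f t) → t = [] := by
  rintro t y' rfl ht
  refine (h.2 [] x t y' (by simp) rfl ?_).2
  have := h.1
  rw [show x ++ a :: (y' ++ t) = (x ++ a :: y') ++ t by simp, ev_append] at this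
  exact isUnit_left ht this

theorem mini_unique_aux {f : A → M} {a : A} {x x' t t' y y' c : List A}
    (h : Mini f x a y) (h' : Mini f x' a y') (hx : x' = c ++ x)
    (hv : y ++ t = y' ++ t') : c = [] ∧ y = y' := by
  subst hx
  rcases List.append_eq_append_iff.mp hv with ⟨k, rfl, rfl⟩ | ⟨k, rfl, rfl⟩
  · obtain ⟨h1, h2⟩ := h'.2 c x k y rfl rfl h.1
    subst h1 h2
    simp
  · have hm : IsUnit (ev f (x ++ a :: y')) := by
      have e1 := h.1
      have e2 := h'.1
      rw [show x ++ a :: (y' ++ k) = (x ++ a :: y') ++ k by simp, ev_append] at e1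
      rw [List.append_assoc, ev_append] at e2
      exact isUnit_mid e2 e1
    obtain ⟨-, h2⟩ := h.2 [] x k y' rfl rfl hm
    obtain ⟨h1, -⟩ := h'.2 c x [] y' rfl (by simp) hm
    subst h1 h2
    simp

theorem mini_unique {f : A → M} {a : A} {s s' x x' t t' y y' : List A}
    (h : Mini f x a y) (h' : Mini f x' a y') (hu : s ++ x = s' ++ x')
    (hv : y ++ t = y' ++ t') : s = s' ∧ x = x' ∧ y = y' ∧ t = t' := by
  rcases List.append_eq_append_iff.mp hu with ⟨c, rfl, hc⟩ | ⟨c, rfl, hc⟩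
  · obtain ⟨h1, rfl⟩ := mini_unique_aux h' h hc hv.symm
    subst h1
    simp at hc hv ⊢
    exact ⟨hc, hv⟩
  · obtain ⟨h1, rfl⟩ := mini_unique_aux h h' hc hv
    subst h1
    simp at hc hv ⊢
    exact ⟨hc.symm, hv⟩

/-- Relator edges of the two-sided Cayley graph. -/
def REdge (f : A → M) (W : Set (List A)) (u : M) (a : A) (v : M) : Prop :=
  ∃ m₁ m₂ x y, x ++ a :: y ∈ W ∧ u = m₁ * ev f x ∧ v = ev f y * m₂

open Classical in
/-- Number of non-relator edges along a word. -/
noncomputable def cnt (f : A → M) (W : Set (List A)) : M → List A → M → ℕ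
  | _, [], _ => 0
  | p, a :: l, v => (if REdge f W p a (ev f l * v) then 0 else 1) + cnt f W (p * f a) l v

theorem cnt_append (f : A → M) (W : Set (List A)) (l l' : List A) : ∀ (p v : M),
    cnt f W p (l ++ l') v = cnt f W p l (ev f l' * v) + cnt f W (p * ev f l) l' v := by
  induction l with
  | nil => intro p v; simp [cnt]
  | cons a l ih => 
    intro p v
    have e : ev f (l ++ l') * v = ev f l * (ev f l' * v) := by simp [mul_assoc]
    simp only [List.cons_append, cnt, ih, ev_cons, mul_assoc, add_assoc]
    rw [e]

theorem cnt_relator (f : A → M) (W : Set (List A)) {w : List A} (hw : w ∈ W) (m₁ m₂ : M) :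
    ∀ (l x : List A), x ++ l = w → cnt f W (m₁ * ev f x) l m₂ = 0 := by
  intro l
  induction l with
  | nil => intro x _; rfl
  | cons a l ih =>
    intro x hx
    have hR : REdge f W (m₁ * ev f x) a (ev f l * m₂) := ⟨m₁, m₂, x, l, hx ▸ hw, rfl, rfl⟩
    have := ih (x ++ [a]) (by simpa using hx)
    simp only [cnt, if_pos hR]
    simpa [mul_assoc] using this

theorem cnt_congr {f : A → M} {W : Set (List A)} (hW1 : ∀ w ∈ W, ev f w = 1)
    (hW : ∀ p q, ev f p = ev f q → Relation.EqvGen (WStep W) p q)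
    (p v : M) {l l' : List A} (h : ev f l = ev f l') : cnt f W p l v = cnt f W p l' v := by
  have := hW l l' h
  clear h
  induction this with
  | rel x y hxy =>
    obtain ⟨s, w, t, hw, rfl, rfl⟩ := hxy
    have h0 := cnt_relator f W hw (p * ev f s) (ev f t * v) w [] rfl
    simp only [ev_nil, mul_one] at h0
    rw [List.append_assoc]
    simp [cnt_append, hW1 w hw, h0]
  | refl x => rfl
  | symm x y _ ih => exact ih.symm
  | trans x y z _ _ ih ih' => exact ih.trans ih'

/-- Generators of the weak orbit relation. -/
def OStep (x y : M × M) : Prop := ∃ n₁ n₂, n₁ * n₂ = 1 ∧ y = (x.1 * n₁, n₂ * x.2)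

theorem redge_of_orb {f : A → M} {W : Set (List A)} (hs : Function.Surjective (ev f))
    (hW1 : ∀ w ∈ W, ev f w = 1)
    (hW : ∀ p q, ev f p = ev f q → Relation.EqvGen (WStep W) p q)
    {u v : M} {a : A} (h : Relation.EqvGen OStep (u, f a * v) (u * f a, v)) :
    REdge f W u a v := by
  have key : ∀ x y : M × M, Relation.EqvGen OStep x y → ∀ l l', ev f l = x.1 → ev f l' = y.1 →
      cnt f W 1 l x.2 = cnt f W 1 l' y.2 := by
    intro x y hxy
    induction hxy with
    | rel x y hxy =>
      obtain ⟨n₁, n₂, hn, rfl⟩ := hxy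
      intro l l' hl hl'
      obtain ⟨k₁, rfl⟩ := hs n₁
      obtain ⟨k₂, rfl⟩ := hs n₂
      simp only at hl' ⊢
      have e1 : cnt f W 1 l' (ev f k₂ * x.2) = cnt f W 1 (l ++ k₁) (ev f k₂ * x.2) :=
        cnt_congr hW1 hW _ _ (by simp [hl, hl'])
      have e2 : cnt f W (ev f l) (k₁ ++ k₂) x.2 = cnt f W (ev f l) [] x.2 :=
        cnt_congr hW1 hW _ _ (by simp [hn])
      rw [cnt_append] at e2
      have e3 : cnt f W (ev f l) k₁ (ev f k₂ * x.2) = 0 := by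
        have : cnt f W (ev f l) [] x.2 = 0 := rfl
        omega
      rw [e1, cnt_append, one_mul, e3, ← mul_assoc, hn, one_mul, add_zero]
    | refl x => exact fun l l' hl hl' => cnt_congr hW1 hW _ _ (hl.trans hl'.symm)
    | symm x y _ ih => exact fun l l' hl hl' => (ih l' l hl' hl).symm
    | trans x y z _ _ ih ih' =>
      intro l l' hl hl'
      obtain ⟨k, hk⟩ := hs y.1
      exact (ih l k hl hk).trans (ih' k l' hk hl')
  obtain ⟨l, rfl⟩ := hs u
  have := key _ _ h l (l ++ [a]) rfl (by simp)
  rw [cnt_append] at this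
  by_contra hne
  simp [cnt, hne] at this

theorem orb_of_unit {m₁ m₂ x b y : M} (h : IsUnit (x * (b * y))) :
    Relation.EqvGen OStep (m₁ * x, b * (y * m₂)) (m₁ * x * b, y * m₂) := by
  obtain ⟨g, hg⟩ := h
  have hinv : x * (b * y) * (↑g⁻¹ : M) = 1 := by rw [← hg]; simp
  have e2 : (↑g⁻¹ : M) * (g * m₂) = m₂ := by simp
  refine .trans _ (m₁, g * m₂) _ (.symm _ _ (.rel _ _ ?_)) (.rel _ _ ?_)
  · exact ⟨x, b * y * ↑g⁻¹, by rw [← hinv]; simp only [mul_assoc],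
      by simp only [mul_assoc, e2]⟩
  · exact ⟨x * b, y * ↑g⁻¹, by rw [← hinv]; simp only [mul_assoc],
      by simp only [mul_assoc, e2]⟩

/-- Every relator edge has irreducible forms exhibiting a unit word around its letter. -/
theorem redge_nf {f : A → M} {nf : M → List A} (h1 : ∀ m, ev f (nf m) = m)
    (hirr : ∀ m, Irr f nf (nf m)) (hlen : ∀ p, (nf (ev f p)).length ≤ p.length)
    {W : Set (List A)} (hW1 : ∀ w ∈ W, ev f w = 1) {u v : M} {a : A} (h : REdge f W u a v) :
    ∃ w ∈ W, ∃ s x y t, Irr f nf (s ++ x) ∧ Irr f nf (y ++ t) ∧ ev f (s ++ x) = u ∧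
      ev f (y ++ t) = v ∧ IsUnit (ev f (x ++ a :: y)) ∧ x.length ≤ w.length ∧
      y.length ≤ w.length := by
  obtain ⟨m₁, m₂, x, y, hw, rfl, rfl⟩ := h
  have hone : ev f x * (f a * ev f y) = 1 := by simpa using hW1 _ hw
  obtain ⟨t, x₁, hx, ht, hxno⟩ := strip_prefix f _ (nf (ev f x)) rfl
  obtain ⟨t', y₁, hy, ht', hyno⟩ := strip_suffix f _ (nf (ev f y)) rfl
  have ex : ev f t * ev f x₁ = ev f x := by rw [← ev_append, ← hx, h1]
  have ey : ev f y₁ * ev f t' = ev f y := by rw [← ev_append, ← hy, h1]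
  have hlx := hlen x
  have hly := hlen y
  rw [hx] at hlx
  rw [hy] at hly
  have hu : IsUnit (ev f (x₁ ++ a :: y₁)) := by
    have h2 : IsUnit (ev f t * ev f (x₁ ++ a :: y₁) * ev f t') := by
      have : ev f t * ev f (x₁ ++ a :: y₁) * ev f t' = 1 := by
        rw [← hone, ← ex, ← ey]; simp [mul_assoc]
      rw [this]; exact isUnit_one
    exact isUnit_right ht (isUnit_left ht' h2)
  have hix : Irr f nf x₁ := by
    have := hirr (ev f x)
    rw [hx] at this
    exact Irr.sub (t := []) (by simpa using this)
  have hiy : Irr f nf y₁ := by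
    have := hirr (ev f y)
    rw [hy] at this
    exact Irr.sub (s := []) this
  refine ⟨_, hw, nf (m₁ * ev f t), x₁, y₁, nf (ev f t' * m₂), ?_, ?_, ?_, ?_, hu, ?_, ?_⟩
  · refine irr_append_right (hirr _) hix ?_ hxno
    rw [ev_append] at hu
    exact rinv_of_unit_mul hu
  · refine irr_append_left (hirr _) hiy ?_ hyno
    rw [ev_append, ev_cons, ← mul_assoc] at hu
    exact linv_of_unit_mul hu
  · rw [ev_append, h1, mul_assoc, ex]
  · rw [ev_append, h1, ← mul_assoc, ey]
  · simp at hlx ⊢; omega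
  · simp at hly ⊢; omega

theorem main_aux [Finite A] (f : A → M) (hs : Function.Surjective (ev f)) {W : Set (List A)}
    (hfin : W.Finite) (hW1 : ∀ w ∈ W, ev f w = 1)
    (hW : ∀ p q, ev f p = ev f q → Relation.EqvGen (WStep W) p q)
    (E : Set (M × A × M))
    (hE : ∀ e : M × A × M, e ∈ E ↔
      Relation.EqvGen OStep (e.1, f e.2.1 * e.2.2) (e.1 * f e.2.1, e.2.2)) :
    (∀ m₁ m₂ : M, ∀ e ∈ E, (m₁ * e.1, e.2.1, e.2.2 * m₂) ∈ E) ∧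
    ∃ C : Set (M × A × M), C.Finite ∧ C ⊆ E ∧
      ∀ e ∈ E, ∃! x : (M × M) × (M × A × M),
        x.2 ∈ C ∧ e = (x.1.1 * x.2.1, x.2.2.1, x.2.2.2 * x.1.2) := by
  obtain ⟨nf, h1, hirr, h0, hlen⟩ := exists_nf f hs
  have huniq : ∀ {p q}, Irr f nf p → Irr f nf q → ev f p = ev f q → p = q :=
    fun hp hq h => irr_unique h1 h0 hW1 hW hp hq h
  have hER : ∀ u a v, (u, a, v) ∈ E → REdge f W u a v := fun u a v h =>
    redge_of_orb hs hW1 hW ((hE _).1 h)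
  have hUE : ∀ m₁ m₂ x a y, IsUnit (ev f (x ++ a :: y)) →
      (m₁ * ev f x, a, ev f y * m₂) ∈ E := by
    intro m₁ m₂ x a y h
    rw [hE]
    exact orb_of_unit (by simpa using h)
  -- appending a minimal word keeps irreducibility
  have happ : ∀ m₁ m₂ x a y, Irr f nf x → Irr f nf y → Mini f x a y →
      Irr f nf (nf m₁ ++ x) ∧ Irr f nf (y ++ nf m₂) := by
    intro m₁ m₂ x a y hx hy hm
    have hu := hm.1
    rw [ev_append] at hu
    refine ⟨irr_append_right (hirr _) hx (rinv_of_unit_mul hu) hm.noprefix,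
      irr_append_left (hirr _) hy ?_ hm.nosuffix⟩
    rw [ev_cons, ← mul_assoc] at hu
    exact linv_of_unit_mul hu
  refine ⟨?_, {c | ∃ x y, Irr f nf x ∧ Irr f nf y ∧ Mini f x c.2.1 y ∧
    c.1 = ev f x ∧ c.2.2 = ev f y}, ?_, ?_, ?_⟩
  · rintro m₁ m₂ ⟨u, a, v⟩ he
    obtain ⟨n₁, n₂, x, y, hw, rfl, rfl⟩ := hER u a v he
    have := hUE (m₁ * n₁) (n₂ * m₂) x a y (by rw [hW1 _ hw]; exact isUnit_one)
    simpa [mul_assoc] using this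
  · obtain ⟨K, hK⟩ := (hfin.image List.length).bddAbove
    have hKf : {l : List A | l.length ≤ K}.Finite := List.finite_length_le A K
    refine ((hKf.prod (Set.finite_univ (α := A) |>.prod hKf)).image
      fun q => (ev f q.1, q.2.1, ev f q.2.2)).subset ?_
    rintro ⟨c₁, a, c₂⟩ ⟨x, y, hx, hy, hm, h₁, h₂⟩
    simp only at hm h₁ h₂
    subst h₁ h₂
    have hmem : (ev f x, a, ev f y) ∈ E := by simpa using hUE 1 1 x a y hm.1
    obtain ⟨w, hw, s, x₁, y₁, t, hi, hi', e, e', hu, hlx, hly⟩ :=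
      redge_nf h1 hirr hlen hW1 (hER _ _ _ hmem)
    have ex := huniq hi hx e
    have ey := huniq hi' hy e'
    obtain ⟨hs0, ht0⟩ := hm.2 s x₁ t y₁ ex.symm ey.symm hu
    subst hs0 ht0
    have hwK : w.length ≤ K := hK ⟨w, hw, rfl⟩
    refine ⟨(x, a, y), ⟨?_, trivial, ?_⟩, rfl⟩
    · simp at ex; subst ex; exact hlx.trans hwK
    · simp at ey; subst ey; exact hly.trans hwK
  · rintro ⟨c₁, a, c₂⟩ ⟨x, y, hx, hy, hm, h₁, h₂⟩
    simp only at hm h₁ h₂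
    subst h₁ h₂
    simpa using hUE 1 1 x a y hm.1
  · rintro ⟨u, a, v⟩ he
    obtain ⟨w, hw, s, x₁, y₁, t, hi, hi', e, e', hu, -, -⟩ :=
      redge_nf h1 hirr hlen hW1 (hER _ _ _ he)
    obtain ⟨x', x₀, y', y₀, rfl, rfl, hm⟩ := exists_mini f a _ x₁ y₁ rfl hu
    subst e e'
    refine existsUnique_of_exists_of_unique ?_ ?_
    · refine ⟨((ev f (s ++ x'), ev f (y' ++ t)), (ev f x₀, a, ev f y₀)),
        ⟨x₀, y₀, ?_, ?_, hm, rfl, rfl⟩, ?_⟩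
      · exact Irr.sub (s := s ++ x') (t := []) (by simpa using hi)
      · exact Irr.sub (s := []) (t := y' ++ t) (by simpa using hi')
      · simp [mul_assoc]
    · rintro ⟨⟨m₁, m₂⟩, ⟨c₁, b, c₂⟩⟩ ⟨⟨n₁, n₂⟩, ⟨d₁, b', d₂⟩⟩
        ⟨⟨x, y, hx, hy, hmxy, hc₁, hc₂⟩, hxe⟩ ⟨⟨p, q, hp, hq, hmpq, hd₁, hd₂⟩, hpe⟩
      simp only at hmxy hc₁ hc₂ hmpq hd₁ hd₂ hxe hpe
      subst hc₁ hc₂ hd₁ hd₂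
      rw [hxe] at hpe
      simp only [Prod.mk.injEq] at hpe
      obtain ⟨hA, rfl, hB⟩ := hpe
      obtain ⟨i1, i2⟩ := happ m₁ m₂ x b y hx hy hmxy
      obtain ⟨i3, i4⟩ := happ n₁ n₂ p b q hp hq hmpq
      have e1 := huniq i1 i3 (by simpa [h1] using hA)
      have e2 := huniq i2 i4 (by simpa [h1] using hB)
      obtain ⟨g1, rfl, rfl, g2⟩ := mini_unique hmxy hmpq e1 e2
      rw [← h1 m₁, ← h1 m₂, g1, g2, h1, h1]

theorem eqvGen_append {W : Set (List A)} {p q : List A} (h : Relation.EqvGen (WStep W) p q)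
    (l r : List A) : Relation.EqvGen (WStep W) (l ++ p ++ r) (l ++ q ++ r) := by
  induction h with
  | rel x y hxy =>
    obtain ⟨s, w, t, hw, rfl, rfl⟩ := hxy
    exact .rel _ _ ⟨l ++ s, w, t ++ r, hw, by simp, by simp⟩
  | refl x => exact .refl _
  | symm x y _ ih => exact .symm _ _ ih
  | trans x y z _ _ ih ih' => exact .trans _ _ _ ih ih'

theorem mk_eq_ev (rel : FreeMonoid A → FreeMonoid A → Prop) (l : List A) :
    PresentedMonoid.mk rel (FreeMonoid.ofList l) = ev (PresentedMonoid.of rel) l := by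
  induction l with
  | nil => exact map_one _
  | cons a l ih =>
    rw [FreeMonoid.ofList_cons, map_mul, ih, ev_cons]
    rfl

end SpecialMonoidAux


/-- Let `M = ⟨A ∣ w₁ = 1, …, w_k = 1⟩` be a finitely presented special monoid, `N` the
submonoid of `M × Mᵐᵒᵖ` of pairs `(u, v)` with `u * v = 1`, and `orb` the weak `N`-orbit
equivalence on `M × M` generated by `(m₁, m₂) ≈ (m₁ n₁, n₂ m₂)` for `(n₁, n₂) ∈ N`.
Let `E` be the set of edges `(u, a, v)` of the two-sided Cayley graph of `M` whose
endpoints `(u, π(a) v)` and `(u π(a), v)` lie in the same weak `N`-orbit.  Then `E` is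
closed under the `M × Mᵐᵒᵖ`-action `(m₁, m₂)·(u, a, v) = (m₁ u, a, v m₂)` and is a
finitely generated free left `M × Mᵐᵒᵖ`-set: there is a finite `C ⊆ E` such that every
element of `E` is uniquely of the form `(m₁ c₁, a, c₂ m₂)` with `(c₁, a, c₂) ∈ C`. -/
theorem special_monoid_collapsed_edges_free {A : Type*} [Fintype A] {k : ℕ}
    (w : Fin k → FreeMonoid A)
    (rel : FreeMonoid A → FreeMonoid A → Prop)
    (hrel : ∀ x y, rel x y ↔ ∃ i : Fin k, x = w i ∧ y = 1)
    (N : Submonoid (PresentedMonoid rel × (PresentedMonoid rel)ᵐᵒᵖ))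
    (hN : ∀ p : PresentedMonoid rel × (PresentedMonoid rel)ᵐᵒᵖ,
      p ∈ N ↔ p.1 * p.2.unop = 1)
    (orb : (PresentedMonoid rel × PresentedMonoid rel) →
      (PresentedMonoid rel × PresentedMonoid rel) → Prop)
    (horb : orb = Relation.EqvGen fun x y => ∃ n ∈ N, y = (x.1 * n.1, n.2.unop * x.2))
    (E : Set (PresentedMonoid rel × A × PresentedMonoid rel))
    (hE : ∀ e : PresentedMonoid rel × A × PresentedMonoid rel, e ∈ E ↔
      orb (e.1, PresentedMonoid.of rel e.2.1 * e.2.2)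
        (e.1 * PresentedMonoid.of rel e.2.1, e.2.2)) :
    (∀ m₁ m₂ : PresentedMonoid rel, ∀ e ∈ E, (m₁ * e.1, e.2.1, e.2.2 * m₂) ∈ E) ∧
    ∃ C : Set (PresentedMonoid rel × A × PresentedMonoid rel), C.Finite ∧ C ⊆ E ∧
      ∀ e ∈ E, ∃! x : (PresentedMonoid rel × PresentedMonoid rel) ×
          (PresentedMonoid rel × A × PresentedMonoid rel),
        x.2 ∈ C ∧ e = (x.1.1 * x.2.1, x.2.2.1, x.2.2.2 * x.1.2) := by
  classical
  have hOS : (fun x y : PresentedMonoid rel × PresentedMonoid rel =>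
      ∃ n ∈ N, y = (x.1 * n.1, n.2.unop * x.2)) = SpecialMonoidAux.OStep := by
    funext x y
    apply propext
    constructor
    · rintro ⟨n, hn, h⟩
      exact ⟨n.1, n.2.unop, (hN n).1 hn, h⟩
    · rintro ⟨n₁, n₂, hn, h⟩
      exact ⟨(n₁, MulOpposite.op n₂), (hN _).2 hn, h⟩
  subst horb
  rw [hOS] at hE
  refine SpecialMonoidAux.main_aux (PresentedMonoid.of rel) ?_
    (W := Set.range fun i => (w i).toList) (Set.finite_range _) ?_ ?_ E hE
  · intro m
    induction m with
    | _ m =>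
      exact ⟨m.toList, by rw [← SpecialMonoidAux.mk_eq_ev]; rfl⟩
  · rintro _ ⟨i, rfl⟩
    rw [← SpecialMonoidAux.mk_eq_ev]
    exact (PresentedMonoid.mk_eq_mk_of_rel ((hrel (w i) 1).2 ⟨i, rfl, rfl⟩)).trans (map_one _)
  · intro p q h
    rw [← SpecialMonoidAux.mk_eq_ev, ← SpecialMonoidAux.mk_eq_ev,
      PresentedMonoid.mk_eq_mk_iff] at h
    have key : ∀ x y : FreeMonoid A, ConGen.Rel rel x y → Relation.EqvGen
        (SpecialMonoidAux.WStep (Set.range fun i => (w i).toList)) x.toList y.toList := by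
      intro x y hxy
      induction hxy with
      | of x y h =>
        obtain ⟨i, rfl, rfl⟩ := (hrel x y).1 h
        exact .rel _ _ ⟨[], (w i).toList, [], ⟨i, rfl⟩, by simp, rfl⟩
      | refl x => exact .refl _
      | symm _ ih => exact .symm _ _ ih
      | trans _ _ ih ih' => exact .trans _ _ _ ih ih'
      | @mul a b c d _ _ ih ih' =>
        have h1 := SpecialMonoidAux.eqvGen_append ih [] c.toList
        have h2 := SpecialMonoidAux.eqvGen_append ih' b.toList []
        simp only [List.nil_append, List.append_nil] at h1 h2
        rw [FreeMonoid.toList_mul, FreeMonoid.toList_mul]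
        exact .trans _ _ _ h1 h2
    exact key _ _ h
end
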